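/- arXiv:2510.27670 — 8 statements merged into one kernel-verified Lean document; each statement's English description precedes it below -/
import Mathlib

section
/- Let A₁, A₂, A₃ be hermitian 4×4 complex matrices whose joint numerical range W = W(A₁,A₂,A₃) has dimension 3. If G₁, G₂, G₃ are three mutually distinct one-dimensional nonexposed faces of W, then G₁ ∩ G₂ ∩ G₃ = ∅. -/
open Matrix ComplexOrder

noncomputable section

/-- A density matrix: positive semidefinite with unit trace. -/
def IsDensity {n : Type*} [Fintype n] (ρ : Matrix n n ℂ) : Prop :=
  ρ.PosSemidef ∧ ρ.trace = 1

/-- The measurement map `ρ ↦ (tr ρA₁, …, tr ρA_k)` (the traces are real for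
hermitian matrices). -/
def wpt {n : Type*} [Fintype n] {k : ℕ} (A : Fin k → Matrix n n ℂ)
    (ρ : Matrix n n ℂ) : Fin k → ℝ :=
  fun i => ((ρ * A i).trace).re

/-- The joint numerical range of `k` matrices. -/
def JNR {n : Type*} [Fintype n] {k : ℕ} (A : Fin k → Matrix n n ℂ) :
    Set (Fin k → ℝ) :=
  wpt A '' {ρ | IsDensity ρ}

/-- `F` is a face of the convex set `C`: a convex subset such that whenever an
open segment between two points of `C` meets `F`, both endpoints lie in `F`. -/
def IsFaceOf {E : Type*} [AddCommGroup E] [Module ℝ E] (C F : Set E) : Prop :=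
  Convex ℝ F ∧ IsExtreme ℝ C F

/-- The dimension of a convex set: the dimension of its affine hull. -/
def convDim {E : Type*} [AddCommGroup E] [Module ℝ E] (F : Set E) : ℕ :=
  Module.finrank ℝ (affineSpan ℝ F).direction

/-- Euclidean dot product on `Fin d → ℝ`. -/
def dotR {d : ℕ} (u v : Fin d → ℝ) : ℝ := ∑ i, u i * v i

/-- `F` is an exposed face of `C`: the set of minimizers of a linear functional. -/
def IsExposedFace {d : ℕ} (C F : Set (Fin d → ℝ)) : Prop :=
  ∃ u : Fin d → ℝ, F = {x ∈ C | ∀ y ∈ C, dotR u x ≤ dotR u y}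

/-- The normal cone of `C` at `p`. -/
def normalConeAt {d : ℕ} (C : Set (Fin d → ℝ)) (p : Fin d → ℝ) :
    Set (Fin d → ℝ) :=
  {u | ∀ y ∈ C, 0 ≤ dotR (y - p) u}

/-- `p` is a corner point of `C` if the normal cone of `C` at `p` spans `ℝ^d`. -/
def IsCornerPoint {d : ℕ} (C : Set (Fin d → ℝ)) (p : Fin d → ℝ) : Prop :=
  p ∈ C ∧ Submodule.span ℝ (normalConeAt C p) = ⊤

/-- The closed unit disk of `ℝ²`. -/
def unitDisk2 : Set (Fin 2 → ℝ) := {v | v 0 ^ 2 + v 1 ^ 2 ≤ 1}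

/-- An elliptic disk in `ℝ³`: the image of the closed unit disk of `ℝ²` under an
injective affine map. -/
def IsEllipticDisk (F : Set (Fin 3 → ℝ)) : Prop :=
  ∃ f : (Fin 2 → ℝ) →ᵃ[ℝ] (Fin 3 → ℝ), Function.Injective f ∧ F = f '' unitDisk2

/-- A non-elliptic face of `W`: a two-dimensional face that is not an elliptic
disk. -/
def IsNonEllipticFace (W F : Set (Fin 3 → ℝ)) : Prop :=
  IsFaceOf W F ∧ convDim F = 2 ∧ ¬ IsEllipticDisk F

/-- A rank-3 face of the joint numerical range of `A`. -/
def IsRank3Face {k : ℕ} (A : Fin k → Matrix (Fin 4) (Fin 4) ℂ)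
    (F : Set (Fin k → ℝ)) : Prop :=
  F.Nonempty ∧ IsFaceOf (JNR A) F ∧
    ∃ P : Matrix (Fin 4) (Fin 4) ℂ, Pᴴ = P ∧ P * P = P ∧ P.rank = 3 ∧
      ∀ ρ : Matrix (Fin 4) (Fin 4) ℂ, IsDensity ρ → (wpt A ρ ∈ F ↔ P * ρ * P = ρ)

section helpers

def proj4 (ψ : Fin 4 → ℂ) : Matrix (Fin 4) (Fin 4) ℂ := vecMulVec ψ (star ψ)

def QQ (A : Fin 3 → Matrix (Fin 4) (Fin 4) ℂ) (ψ : Fin 4 → ℂ) : Fin 3 → ℝ :=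
  wpt A (proj4 ψ)

def nn (ψ : Fin 4 → ℂ) : ℝ := (proj4 ψ).trace.re

lemma wpt_add {k : ℕ} (A : Fin k → Matrix (Fin 4) (Fin 4) ℂ) (ρ σ : Matrix (Fin 4) (Fin 4) ℂ) :
    wpt A (ρ + σ) = wpt A ρ + wpt A σ := by
  ext i; simp [wpt, add_mul]

lemma wpt_smul {k : ℕ} (A : Fin k → Matrix (Fin 4) (Fin 4) ℂ) (r : ℝ)
    (ρ : Matrix (Fin 4) (Fin 4) ℂ) :
    wpt A (r • ρ) = r • wpt A ρ := by
  ext i; simp [wpt]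

lemma wpt_sum {k m : ℕ} (A : Fin k → Matrix (Fin 4) (Fin 4) ℂ)
    (ρ : Fin m → Matrix (Fin 4) (Fin 4) ℂ) :
    wpt A (∑ j, ρ j) = ∑ j, wpt A (ρ j) := by
  ext i; simp [wpt, Finset.sum_mul, Matrix.trace_sum]

lemma nn_eq (ψ : Fin 4 → ℂ) : nn ψ = ∑ i, Complex.normSq (ψ i) := by
  simp [nn, proj4, Matrix.trace, vecMulVec_apply, Complex.normSq_apply, Complex.mul_conj]

lemma nn_nonneg (ψ : Fin 4 → ℂ) : 0 ≤ nn ψ := by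
  rw [nn_eq]; exact Finset.sum_nonneg fun i _ => Complex.normSq_nonneg _

lemma nn_eq_zero {ψ : Fin 4 → ℂ} (h : nn ψ = 0) : ψ = 0 := by
  rw [nn_eq, Finset.sum_eq_zero_iff_of_nonneg (fun i _ => Complex.normSq_nonneg _)] at h
  ext1 i
  exact Complex.normSq_eq_zero.1 (h i (Finset.mem_univ _))

lemma nn_pos {ψ : Fin 4 → ℂ} (h : ψ ≠ 0) : 0 < nn ψ :=
  lt_of_le_of_ne (nn_nonneg _) (fun h' => h (nn_eq_zero h'.symm))

lemma proj4_smul (c : ℂ) (ψ : Fin 4 → ℂ) : proj4 (c • ψ) = (Complex.normSq c) • proj4 ψ := by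
  ext i j
  simp only [proj4, vecMulVec_apply, Pi.smul_apply, smul_eq_mul, Pi.star_apply, star_mul',
    Matrix.smul_apply, Complex.real_smul, Complex.normSq_eq_conj_mul_self]
  simp only [Complex.star_def]
  ring

lemma proj4_par (ψ φ : Fin 4 → ℂ) :
    proj4 (ψ + φ) + proj4 (ψ - φ) = (2:ℝ) • proj4 ψ + (2:ℝ) • proj4 φ := by
  ext i j
  simp [proj4, vecMulVec_apply]
  ring

lemma nn_smul (c : ℂ) (ψ : Fin 4 → ℂ) : nn (c • ψ) = Complex.normSq c * nn ψ := by
  simp [nn, proj4_smul]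

lemma QQ_smul (A : Fin 3 → Matrix (Fin 4) (Fin 4) ℂ) (c : ℂ) (ψ : Fin 4 → ℂ) :
    QQ A (c • ψ) = Complex.normSq c • QQ A ψ := by
  simp [QQ, proj4_smul, wpt_smul]

lemma nn_par (ψ φ : Fin 4 → ℂ) :
    nn (ψ + φ) + nn (ψ - φ) = 2 * nn ψ + 2 * nn φ := by
  have := congrArg (fun M => (Matrix.trace M).re) (proj4_par ψ φ)
  simpa [nn] using this

lemma QQ_par (A : Fin 3 → Matrix (Fin 4) (Fin 4) ℂ) (ψ φ : Fin 4 → ℂ) :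
    QQ A (ψ + φ) + QQ A (ψ - φ) = (2:ℝ) • QQ A ψ + (2:ℝ) • QQ A φ := by
  have := congrArg (wpt A) (proj4_par ψ φ)
  simpa [QQ, wpt_add, wpt_smul] using this

lemma QQ_zero (A : Fin 3 → Matrix (Fin 4) (Fin 4) ℂ) : QQ A 0 = 0 := by
  simpa using QQ_smul A 0 0

lemma nn_zero : nn 0 = 0 := by simp [nn_eq]

lemma JNR_convex (A : Fin 3 → Matrix (Fin 4) (Fin 4) ℂ) : Convex ℝ (JNR A) := by
  rintro _ ⟨ρ, ⟨h1, h2⟩, rfl⟩ _ ⟨σ, ⟨h3, h4⟩, rfl⟩ a b ha hb hab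
  refine ⟨a • ρ + b • σ, ⟨(h1.smul ha).add (h3.smul hb), ?_⟩, ?_⟩
  · simp only [Matrix.trace_add, Matrix.trace_smul, h2, h4]
    rw [Complex.real_smul, Complex.real_smul, mul_one, mul_one]
    exact_mod_cast hab
  · rw [wpt_add, wpt_smul, wpt_smul]

lemma QQ_mem {A : Fin 3 → Matrix (Fin 4) (Fin 4) ℂ} {ψ : Fin 4 → ℂ} (h : ψ ≠ 0) :
    (nn ψ)⁻¹ • QQ A ψ ∈ JNR A := by
  have hp := nn_pos h
  refine ⟨(nn ψ)⁻¹ • proj4 ψ, ⟨(posSemidef_vecMulVec_self_star ψ).smul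
    (inv_nonneg.2 hp.le), ?_⟩, by rw [wpt_smul]; rfl⟩
  have h1 : (proj4 ψ).trace = (nn ψ : ℂ) := by
    apply Complex.ext
    · simp [nn]
    · simp [proj4, Matrix.trace, vecMulVec_apply, Complex.mul_conj]
  rw [Matrix.trace_smul, h1, Complex.real_smul]
  norm_cast
  exact inv_mul_cancel₀ hp.ne'

/-- decomposition of a point -/
lemma JNR_sub {A : Fin 3 → Matrix (Fin 4) (Fin 4) ℂ} {T : Set (Fin 3 → ℝ)} (hT : Convex ℝ T)
    (h : ∀ ψ, ψ ≠ 0 → (nn ψ)⁻¹ • QQ A ψ ∈ T) : JNR A ⊆ T := by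
  rintro _ ⟨ρ, ⟨h1, h2⟩, rfl⟩
  obtain ⟨m, v, rfl⟩ := Matrix.posSemidef_iff_eq_sum_vecMulVec.1 h1
  have hs : ∑ j, nn (v j) = 1 := by
    have := congrArg Complex.re h2
    simpa [Matrix.trace_sum, nn, proj4] using this
  classical
  have e : wpt A (∑ j, vecMulVec (v j) (star (v j))) =
      ∑ j, nn (v j) • (fun j => if v j = 0 then (nn (Pi.single 0 1))⁻¹ • QQ A (Pi.single 0 1)
        else (nn (v j))⁻¹ • QQ A (v j)) j := by
    rw [wpt_sum]
    refine Finset.sum_congr rfl fun j _ => ?_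
    change QQ A (v j) = _
    by_cases hj : v j = 0
    · simp [hj, nn_zero, QQ_zero]
    · simp only [hj, if_false]
      rw [smul_smul, mul_inv_cancel₀ (nn_pos hj).ne', one_smul]
  rw [e]
  refine hT.sum_mem (fun j _ => nn_nonneg _) hs fun j _ => ?_
  by_cases hj : v j = 0
  · simp only [hj, if_true]
    exact h _ (by simp)
  · simp only [hj, if_false]
    exact h _ hj

lemma face_sub {A : Fin 3 → Matrix (Fin 4) (Fin 4) ℂ} {F T : Set (Fin 3 → ℝ)}
    (hF : IsFaceOf (JNR A) F) (hT : Convex ℝ T)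
    (h : ∀ ψ, ψ ≠ 0 → (nn ψ)⁻¹ • QQ A ψ ∈ F → (nn ψ)⁻¹ • QQ A ψ ∈ T) : F ⊆ T := by
  have hc : Convex ℝ {x ∈ JNR A | x ∈ F → x ∈ T} := by
    rw [convex_iff_forall_pos]
    rintro x ⟨hx, hx'⟩ y ⟨hy, hy'⟩ a b ha hb hab
    refine ⟨JNR_convex A hx hy ha.le hb.le hab, fun hz => ?_⟩
    have hseg : a • x + b • y ∈ openSegment ℝ x y := ⟨a, b, ha, hb, hab, rfl⟩
    exact hT (hx' (hF.2.left_mem_of_mem_openSegment hx hy hz hseg))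
      (hy' (hF.2.right_mem_of_mem_openSegment hx hy hz hseg)) ha.le hb.le hab
  have := JNR_sub (A := A) hc (fun ψ hψ => ⟨QQ_mem hψ, h ψ hψ⟩)
  exact fun x hx => (this (hF.2.subset hx)).2 hx

/-- vectors whose pure states lie in the face -/
def LL (A : Fin 3 → Matrix (Fin 4) (Fin 4) ℂ) (F : Set (Fin 3 → ℝ))
    (hF : IsFaceOf (JNR A) F) : Submodule ℂ (Fin 4 → ℂ) where
  carrier := {ψ | ψ ≠ 0 → (nn ψ)⁻¹ • QQ A ψ ∈ F}
  zero_mem' := fun h => absurd rfl h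
  smul_mem' := by
    intro c ψ h hc
    have hc0 : c ≠ 0 := fun h => hc (by simp [h])
    have hψ : ψ ≠ 0 := fun h => hc (by simp [h])
    have := h hψ
    rw [nn_smul, QQ_smul, smul_smul, mul_inv, mul_comm, ← mul_assoc,
      mul_inv_cancel₀ (by simpa using hc0), one_mul]
    exact this
  add_mem' := by
    intro ψ φ h1 h2 h3
    by_cases hψ : ψ = 0
    · subst hψ; simpa using h2 (by simpa using h3)
    by_cases hφ : φ = 0
    · subst hφ; simpa using h1 (by simpa using h3)
    have h1 := h1 hψ
    have h2 := h2 hφ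
    have p1 := nn_pos hψ
    have p2 := nn_pos hφ
    have p3 := nn_pos h3
    have hn := nn_par ψ φ
    have hq := QQ_par A ψ φ
    set N := 2 * nn ψ + 2 * nn φ with hN
    have hNp : 0 < N := by positivity
    have hg : N⁻¹ • (QQ A (ψ + φ) + QQ A (ψ - φ)) ∈ F := by
      have hcv : Convex ℝ F := hF.1
      have := hcv h1 h2 (show 0 ≤ 2 * nn ψ / N by positivity)
        (show 0 ≤ 2 * nn φ / N by positivity) (by rw [← add_div]; exact div_self hNp.ne')
      convert this using 1
      rw [hq, smul_add]
      simp only [smul_smul]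
      congr 2 <;> field_simp
    by_cases h4 : ψ - φ = 0
    · rw [h4, nn_zero, add_zero] at hn
      rw [h4, QQ_zero, add_zero, ← hn] at hg
      exact hg
    · have p4 := nn_pos h4
      refine hF.2.left_mem_of_mem_openSegment (QQ_mem h3) (QQ_mem h4) hg
        ⟨nn (ψ + φ) / N, nn (ψ - φ) / N, by positivity, by positivity, ?_, ?_⟩
      · rw [← add_div, hn]; exact div_self hNp.ne'
      · rw [smul_add]
        simp only [smul_smul]
        congr 2 <;> field_simp

lemma mem_LL {A : Fin 3 → Matrix (Fin 4) (Fin 4) ℂ} {F : Set (Fin 3 → ℝ)}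
    {hF : IsFaceOf (JNR A) F} {ψ : Fin 4 → ℂ} :
    ψ ∈ LL A F hF ↔ (ψ ≠ 0 → (nn ψ)⁻¹ • QQ A ψ ∈ F) := Iff.rfl

lemma sub_of_LL_le {A : Fin 3 → Matrix (Fin 4) (Fin 4) ℂ} {F G : Set (Fin 3 → ℝ)}
    (hF : IsFaceOf (JNR A) F) (hG : IsFaceOf (JNR A) G) (h : LL A F hF ≤ LL A G hG) : F ⊆ G :=
  face_sub hF hG.1 fun ψ hψ hm => (h (show ψ ∈ LL A F hF from fun _ => hm)) hψ

lemma LL_mono {A : Fin 3 → Matrix (Fin 4) (Fin 4) ℂ} {F G : Set (Fin 3 → ℝ)}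
    (hF : IsFaceOf (JNR A) F) (hG : IsFaceOf (JNR A) G) (h : F ⊆ G) : LL A F hF ≤ LL A G hG :=
  fun _ hψ h0 => h (hψ h0)

lemma sub_singleton {A : Fin 3 → Matrix (Fin 4) (Fin 4) ℂ} {F : Set (Fin 3 → ℝ)}
    (hF : IsFaceOf (JNR A) F) (p : Fin 3 → ℝ)
    (h : ∀ ψ ∈ LL A F hF, ψ ≠ 0 → (nn ψ)⁻¹ • QQ A ψ = p) : F ⊆ {p} :=
  face_sub hF (convex_singleton p) fun ψ hψ hm => h ψ (fun _ => hm) hψ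

lemma two_le_LL {A : Fin 3 → Matrix (Fin 4) (Fin 4) ℂ} {F : Set (Fin 3 → ℝ)}
    (hF : IsFaceOf (JNR A) F) (h : ∀ p, ¬ F ⊆ {p}) : 2 ≤ Module.finrank ℂ (LL A F hF) := by
  by_contra hlt
  have h1 : Module.finrank ℂ (LL A F hF) ≤ 1 := by omega
  obtain ⟨v, hv⟩ := finrank_le_one_iff.1 h1
  refine h ((nn v)⁻¹ • QQ A v) (sub_singleton hF _ fun ψ hm h0 => ?_)
  obtain ⟨c, hc⟩ := hv ⟨ψ, hm⟩
  have hc' : ψ = c • (v : Fin 4 → ℂ) := by simpa using (congrArg Subtype.val hc).symm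
  subst hc'
  have hc0 : c ≠ 0 := fun h => h0 (by simp [h])
  rw [nn_smul, QQ_smul, smul_smul, mul_inv, mul_comm, ← mul_assoc,
      mul_inv_cancel₀ (by simpa using hc0), one_mul]

def LineAt (G : Set (Fin 3 → ℝ)) (p d : Fin 3 → ℝ) : Prop :=
  d ≠ 0 ∧ p ∈ G ∧ p + d ∈ G ∧ ∀ x ∈ G, ∃ t : ℝ, x = p + t • d

lemma lineAt_of_dim {G : Set (Fin 3 → ℝ)} (h : convDim G = 1) {p : Fin 3 → ℝ} (hp : p ∈ G) :
    ∃ d, LineAt G p d := by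
  unfold convDim at h
  rw [direction_affineSpan] at h
  by_cases hx : ∃ x ∈ G, x ≠ p
  · obtain ⟨x, hxG, hxp⟩ := hx
    have hd : x - p ≠ 0 := sub_ne_zero.2 hxp
    have hm : ∀ y ∈ G, y - p ∈ vectorSpan ℝ G := fun y hy => vsub_mem_vectorSpan ℝ hy hp
    refine ⟨x - p, hd, hp, by simpa using hxG, fun y hy => ?_⟩
    have := (finrank_eq_one_iff_of_nonzero' (⟨x - p, hm x hxG⟩ : vectorSpan ℝ G)
      (by simpa [Subtype.ext_iff] using hd)).1 h ⟨y - p, hm y hy⟩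
    obtain ⟨t, ht⟩ := this
    have ht' : t • (x - p) = y - p := by simpa using congrArg Subtype.val ht
    exact ⟨t, by rw [ht']; simp⟩
  · push Not at hx
    have : G = {p} := Set.eq_singleton_iff_unique_mem.2 ⟨hp, hx⟩
    rw [this, vectorSpan_singleton] at h
    simp at h

lemma line_small {G : Set (Fin 3 → ℝ)} (hc : Convex ℝ G) {p d : Fin 3 → ℝ} (h : LineAt G p d)
    {t : ℝ} (h0 : 0 ≤ t) (h1 : t ≤ 1) : p + t • d ∈ G := by
  have := hc h.2.1 h.2.2.1 (sub_nonneg.2 h1) h0 (by ring)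
  convert this using 1
  module

lemma line_sub {W G H : Set (Fin 3 → ℝ)} (hG : IsFaceOf W G) (hH : IsFaceOf W H)
    {p d : Fin 3 → ℝ} (h : LineAt G p d) (hp : p ∈ H) {s : ℝ} (hs : 0 < s)
    (hd : p + s • d ∈ H) : G ⊆ H := by
  intro x hx
  obtain ⟨t, rfl⟩ := h.2.2.2 x hx
  have hxW := hG.2.subset hx
  rcases lt_trichotomy t 0 with ht | ht | ht
  · have hst : 0 < s - t := by linarith
    refine hH.2.left_mem_of_mem_openSegment hxW (hH.2.subset hd) hp
      ⟨s / (s - t), -t / (s - t), by positivity, div_pos (by linarith) hst, ?_, ?_⟩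
    · rw [← add_div, div_eq_one_iff_eq hst.ne']; ring
    · ext i; simp; field_simp; ring
  · subst ht; simpa using hp
  · by_cases hts : t ≤ s
    · have := hH.1 hp hd (show 0 ≤ 1 - t / s by rw [sub_nonneg]; exact (div_le_one hs).2 hts)
        (show 0 ≤ t / s by positivity) (by ring)
      convert this using 1
      ext i; simp; field_simp; ring
    · push Not at hts
      refine hH.2.left_mem_of_mem_openSegment hxW (hH.2.subset hp) hd
        ⟨s / t, 1 - s / t, by positivity, ?_, by ring, ?_⟩
      · rw [sub_pos]; exact (div_lt_one ht).2 hts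
      · ext i; simp; field_simp; ring

lemma line_eq {W G H : Set (Fin 3 → ℝ)} (hG : IsFaceOf W G) (hH : IsFaceOf W H)
    {p d e : Fin 3 → ℝ} (h : LineAt G p d) (h' : LineAt H p e) {s : ℝ} (hs : 0 < s)
    (hd : p + s • d ∈ H) : G = H := by
  have hsub := line_sub hG hH h h'.2.1 hs hd
  refine hsub.antisymm ?_
  intro x hx
  -- d is a multiple of e
  obtain ⟨t, ht⟩ := h'.2.2.2 _ hd
  have hte : s • d = t • e := add_left_cancel ht
  have ht0 : t ≠ 0 := by
    rintro rfl
    rw [zero_smul] at hte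
    rcases smul_eq_zero.1 hte with h1 | h1
    · exact hs.ne' h1
    · exact h.1 h1
  have hed : e = (s / t) • d := by
    rw [div_eq_inv_mul, ← smul_smul, hte, smul_smul, inv_mul_cancel₀ ht0, one_smul]
  have hl : LineAt H p d := by
    refine ⟨h.1, h'.2.1, hsub h.2.2.1, fun y hy => ?_⟩
    obtain ⟨r, rfl⟩ := h'.2.2.2 y hy
    exact ⟨r * (s / t), by rw [hed, smul_smul]⟩
  exact line_sub hH hG hl h.2.1 one_pos (by simpa using h.2.2.1) hx

lemma dep_of_orth {d u v w : Fin 3 → ℝ} (hd : d ≠ 0) (hu : u ⬝ᵥ d = 0) (hv : v ⬝ᵥ d = 0)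
    (hw : w ⬝ᵥ d = 0) : ∃ a b c : ℝ, (a ≠ 0 ∨ b ≠ 0 ∨ c ≠ 0) ∧ a • u + b • v + c • w = 0 := by
  have h1 : (Matrix.of ![u, v, w]).det = 0 := by
    rw [← Matrix.exists_mulVec_eq_zero_iff]
    refine ⟨d, hd, ?_⟩
    ext i
    fin_cases i <;> simpa [Matrix.mulVec]
  rw [← Matrix.exists_vecMul_eq_zero_iff] at h1
  obtain ⟨a, ha, h⟩ := h1
  refine ⟨a 0, a 1, a 2, ?_, ?_⟩
  · by_contra hcon
    push Not at hcon
    apply ha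
    ext i
    fin_cases i <;> simp [hcon]
  · ext i
    have := congrFun h i
    simpa [Matrix.vecMul, dotProduct, Fin.sum_univ_three] using this

/-- sign case one -/
lemma tri_pos {W G₁ G₂ G₃ : Set (Fin 3 → ℝ)} (hW : Convex ℝ W)
    (h₁ : IsFaceOf W G₁) (h₂ : IsFaceOf W G₂) (h₃ : IsFaceOf W G₃) {p d₁ d₂ d₃ : Fin 3 → ℝ}
    (l₁ : LineAt G₁ p d₁) (l₂ : LineAt G₂ p d₂) (l₃ : LineAt G₃ p d₃)
    (h12 : G₁ ≠ G₂) {a b c : ℝ} (ha : 0 < a) (hb : 0 ≤ b) (hc : 0 ≤ c)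
    (h : a • d₁ + b • d₂ + c • d₃ = 0) : False := by
  have hbc : 0 < b + c := by
    rcases hb.lt_or_eq with hb | hb
    · linarith
    rcases hc.lt_or_eq with hc | hc
    · linarith
    subst hb hc
    simp at h
    rcases h with h | h
    · linarith
    · exact (l₁.1 h).elim
  have hz := hW (h₂.2.subset l₂.2.2.1) (h₃.2.subset l₃.2.2.1)
    (show 0 ≤ b / (b + c) by positivity) (show 0 ≤ c / (b + c) by positivity)
    (by rw [← add_div]; exact div_self hbc.ne')
  have : p + d₁ ∈ G₂ := by
    refine h₂.2.left_mem_of_mem_openSegment (h₁.2.subset l₁.2.2.1) hz l₂.2.1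
      ⟨a / (a + b + c), (b + c) / (a + b + c), by positivity, by positivity, by field_simp; ring, ?_⟩
    ext i
    have := congrFun h i
    simp at this ⊢
    have e : a * d₁ i = - (b * d₂ i + c * d₃ i) := by linarith
    field_simp
    linear_combination this
  exact h12 (line_eq h₁ h₂ l₁ l₂ one_pos (by simpa using this))

/-- sign case two -/
lemma tri_neg {W G₁ G₂ G₃ : Set (Fin 3 → ℝ)}
    (h₁ : IsFaceOf W G₁) (h₂ : IsFaceOf W G₂) (h₃ : IsFaceOf W G₃) {p d₁ d₂ d₃ : Fin 3 → ℝ}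
    (l₁ : LineAt G₁ p d₁) (l₂ : LineAt G₂ p d₂) (l₃ : LineAt G₃ p d₃)
    (h12 : G₁ ≠ G₂) (h13 : G₁ ≠ G₃) {a b c : ℝ} (ha : 0 < a) (hb : 0 ≤ b) (hc : 0 ≤ c)
    (h : a • d₁ = b • d₂ + c • d₃) : False := by
  have hS : 0 < a + b + c := by linarith
  have hm := line_small h₁.1 l₁ (t := a / (a + b + c)) (by positivity)
    ((div_le_one hS).2 (by linarith))
  have e : p + (a / (a + b + c)) • d₁ = p + (b / (a + b + c)) • d₂ + (c / (a + b + c)) • d₃ := by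
    ext i
    have := congrFun h i
    simp at this ⊢
    field_simp
    linear_combination this
  rcases hb.lt_or_eq with hb | hb
  · rcases hc.lt_or_eq with hc | hc
    · have hbs : (b + c) / (a + b + c) ≤ 1 := (div_le_one hS).2 (by linarith)
      have m2 := line_small h₂.1 l₂ (t := (b + c) / (a + b + c)) (by positivity) hbs
      have m3 := line_small h₃.1 l₃ (t := (b + c) / (a + b + c)) (by positivity) hbs
      have : p + ((b + c) / (a + b + c)) • d₂ ∈ G₁ := by
        refine h₁.2.left_mem_of_mem_openSegment (h₂.2.subset m2) (h₃.2.subset m3) hm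
          ⟨b / (b + c), c / (b + c), by positivity, by positivity, by field_simp, ?_⟩
        rw [e]
        ext i
        simp
        field_simp
        ring
      exact h12 (line_eq h₂ h₁ l₂ l₁ (by positivity) this).symm
    · subst hc
      simp only [zero_div, zero_smul, add_zero] at e hm
      rw [e] at hm
      exact h12 (line_eq h₂ h₁ l₂ l₁ (by simp at hS; positivity) hm).symm
  · subst hb
    rcases hc.lt_or_eq with hc | hc
    · simp only [zero_div, zero_smul, add_zero] at e hm
      rw [e] at hm
      exact h13 (line_eq h₃ h₁ l₃ l₁ (by positivity) hm).symm
    · subst hc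
      simp at h
      rcases h with h | h
      · linarith
      · exact l₁.1 h

lemma three_lines {W G₁ G₂ G₃ : Set (Fin 3 → ℝ)} (hW : Convex ℝ W)
    (h₁ : IsFaceOf W G₁) (h₂ : IsFaceOf W G₂) (h₃ : IsFaceOf W G₃) {p d₁ d₂ d₃ u : Fin 3 → ℝ}
    (l₁ : LineAt G₁ p d₁) (l₂ : LineAt G₂ p d₂) (l₃ : LineAt G₃ p d₃)
    (h12 : G₁ ≠ G₂) (h13 : G₁ ≠ G₃) (h23 : G₂ ≠ G₃) (hu : u ≠ 0)
    (o₁ : u ⬝ᵥ d₁ = 0) (o₂ : u ⬝ᵥ d₂ = 0) (o₃ : u ⬝ᵥ d₃ = 0) : False := by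
  rw [dotProduct_comm] at o₁ o₂ o₃
  obtain ⟨a, b, c, hne, h⟩ := dep_of_orth hu o₁ o₂ o₃
  -- reduce to a sign normal form
  have key : ∀ a b c : ℝ, a • d₁ + b • d₂ + c • d₃ = 0 → ¬ (0 < a ∧ 0 ≤ b ∧ 0 ≤ c) ∧
      ¬ (0 ≤ a ∧ 0 < b ∧ 0 ≤ c) ∧ ¬ (0 ≤ a ∧ 0 ≤ b ∧ 0 < c) ∧ ¬ (0 < a ∧ b ≤ 0 ∧ c ≤ 0) ∧
      ¬ (a ≤ 0 ∧ 0 < b ∧ c ≤ 0) ∧ ¬ (a ≤ 0 ∧ b ≤ 0 ∧ 0 < c) := by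
    intro a b c h
    refine ⟨?_, ?_, ?_, ?_, ?_, ?_⟩ <;> rintro ⟨ha, hb, hc⟩
    · exact tri_pos hW h₁ h₂ h₃ l₁ l₂ l₃ h12 ha hb hc h
    · exact tri_pos hW h₂ h₁ h₃ l₂ l₁ l₃ h12.symm hb ha hc (by rw [← h]; abel)
    · exact tri_pos hW h₃ h₁ h₂ l₃ l₁ l₂ h13.symm hc ha hb (by rw [← h]; abel)
    · exact tri_neg h₁ h₂ h₃ l₁ l₂ l₃ h12 h13 ha (neg_nonneg.2 hb) (neg_nonneg.2 hc)
        (by rw [← sub_eq_zero, ← h]; module)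
    · exact tri_neg h₂ h₁ h₃ l₂ l₁ l₃ h12.symm h23 hb (neg_nonneg.2 ha) (neg_nonneg.2 hc)
        (by rw [← sub_eq_zero, ← h]; module)
    · exact tri_neg h₃ h₁ h₂ l₃ l₁ l₂ h13.symm h23.symm hc (neg_nonneg.2 ha) (neg_nonneg.2 hb)
        (by rw [← sub_eq_zero, ← h]; module)
  have k1 := key a b c h
  have k2 := key (-a) (-b) (-c) (by
    have : (-a) • d₁ + (-b) • d₂ + (-c) • d₃ = -(a • d₁ + b • d₂ + c • d₃) := by module
    rw [this, h, neg_zero])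
  grind

def FF (W : Set (Fin 3 → ℝ)) (u p : Fin 3 → ℝ) : Set (Fin 3 → ℝ) :=
  {x ∈ W | u ⬝ᵥ (x - p) = 0}

lemma FF_face {W : Set (Fin 3 → ℝ)} (hW : Convex ℝ W) {u p : Fin 3 → ℝ}
    (hu : ∀ y ∈ W, 0 ≤ u ⬝ᵥ (y - p)) : IsFaceOf W (FF W u p) := by
  have e : ∀ (x y : Fin 3 → ℝ) (a b : ℝ), a + b = 1 →
      u ⬝ᵥ (a • x + b • y - p) = a * (u ⬝ᵥ (x - p)) + b * (u ⬝ᵥ (y - p)) := by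
    intro x y a b hab
    have : a • x + b • y - p = a • (x - p) + b • (y - p) := by
      obtain rfl : b = 1 - a := by linarith
      module
    rw [this, dotProduct_add, dotProduct_smul, dotProduct_smul]; rfl
  refine ⟨?_, fun x hx => hx.1, ?_⟩
  · rintro x ⟨hx, hx'⟩ y ⟨hy, hy'⟩ a b ha hb hab
    refine ⟨hW hx hy ha hb hab, ?_⟩
    rw [e _ _ _ _ hab, hx', hy']; simp
  · rintro x hx y hy z ⟨hz, hz'⟩ ⟨a, b, ha, hb, hab, rfl⟩
    refine ⟨hx, ?_⟩
    rw [e _ _ _ _ hab] at hz'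
    have h1 := hu x hx
    have h2 := mul_nonneg hb.le (hu y hy)
    have h3 := mul_nonneg ha.le h1
    have : a * (u ⬝ᵥ (x - p)) = 0 := by linarith
    exact (mul_eq_zero.1 this).resolve_left ha.ne'

lemma FF_exposed {W : Set (Fin 3 → ℝ)} {u p : Fin 3 → ℝ} (hp : p ∈ W)
    (hu : ∀ y ∈ W, 0 ≤ u ⬝ᵥ (y - p)) : IsExposedFace W (FF W u p) := by
  refine ⟨u, ?_⟩
  ext x
  change (x ∈ W ∧ u ⬝ᵥ (x - p) = 0) ↔ (x ∈ W ∧ ∀ y ∈ W, u ⬝ᵥ x ≤ u ⬝ᵥ y)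
  simp only [dotProduct_sub] at hu ⊢
  constructor
  · rintro ⟨h1, h2⟩
    exact ⟨h1, fun y hy => by linarith [hu y hy]⟩
  · rintro ⟨h1, h2⟩
    exact ⟨h1, by linarith [hu x h1, h2 p hp]⟩

lemma FF_inter {W : Set (Fin 3 → ℝ)} {u v p : Fin 3 → ℝ}
    (hu : ∀ y ∈ W, 0 ≤ u ⬝ᵥ (y - p)) (hv : ∀ y ∈ W, 0 ≤ v ⬝ᵥ (y - p)) :
    FF W u p ∩ FF W v p = FF W (u + v) p := by
  ext x
  change ((x ∈ W ∧ _) ∧ (x ∈ W ∧ _)) ↔ (x ∈ W ∧ _)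
  rw [add_dotProduct]
  constructor
  · rintro ⟨⟨h1, h2⟩, -, h3⟩
    exact ⟨h1, by linarith⟩
  · rintro ⟨h1, h2⟩
    have := hu x h1
    have := hv x h1
    exact ⟨⟨h1, by linarith⟩, h1, by linarith⟩

lemma vectorSpan_top {W : Set (Fin 3 → ℝ)} (h : convDim W = 3) : vectorSpan ℝ W = ⊤ := by
  unfold convDim at h
  rw [direction_affineSpan] at h
  exact Submodule.eq_top_of_finrank_eq (by rw [h]; simp)

lemma not_plane {W : Set (Fin 3 → ℝ)} (h : convDim W = 3) {u p : Fin 3 → ℝ} (hu : u ≠ 0)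
    (hW : ∀ x ∈ W, u ⬝ᵥ (x - p) = 0) : False := by
  have h1 := vectorSpan_top h
  let f : (Fin 3 → ℝ) →ₗ[ℝ] ℝ := dotProductBilin ℝ ℝ u
  have hf : ∀ x, f x = u ⬝ᵥ x := fun x => rfl
  have h2 : vectorSpan ℝ W ≤ LinearMap.ker f := by
    unfold vectorSpan
    rw [Submodule.span_le]
    rintro _ ⟨x, hx, y, hy, rfl⟩
    have a := hW x hx
    have b := hW y hy
    rw [dotProduct_sub] at a b
    change f (x - y) = 0
    rw [hf, dotProduct_sub]
    linarith
  have h3 : f u = 0 := h2 (by rw [h1]; trivial)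
  rw [hf, dotProduct_self_eq_zero] at h3
  exact hu h3

lemma exists_normal {W G : Set (Fin 3 → ℝ)} (hW : Convex ℝ W) (h : convDim W = 3)
    (hG : IsFaceOf W G) (hd : convDim G = 1) {p : Fin 3 → ℝ} (hp : p ∈ G) :
    ∃ u : Fin 3 → ℝ, u ≠ 0 ∧ (∀ y ∈ W, 0 ≤ u ⬝ᵥ (y - p)) ∧ G ⊆ FF W u p := by
  have hpW := hG.2.subset hp
  have haff : affineSpan ℝ W = ⊤ := by
    rw [AffineSubspace.affineSpan_eq_top_iff_vectorSpan_eq_top_of_nonempty ℝ _ _ ⟨p, hpW⟩]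
    exact vectorSpan_top h
  have hint : (interior W).Nonempty := hW.interior_nonempty_iff_affineSpan_eq_top.2 haff
  have hdisj : Disjoint (interior W) G := by
    rw [Set.disjoint_left]
    intro x hx hxG
    have hWG : W ⊆ G := by
      intro y hy
      by_cases hxy : y = x
      · rwa [hxy]
      have hc : Filter.Tendsto (fun t : ℝ => x + t • (x - y)) (nhdsWithin 0 (Set.Ioi 0))
          (nhds x) := by
        have : Continuous (fun t : ℝ => x + t • (x - y)) := by fun_prop
        have := this.tendsto 0
        simp only [zero_smul, add_zero] at this
        exact this.mono_left nhdsWithin_le_nhds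
      have hev := hc.eventually (isOpen_interior.mem_nhds hx)
      obtain ⟨t, ht, ht0⟩ := (hev.and self_mem_nhdsWithin).exists
      have ht0 : 0 < t := ht0
      refine hG.2.left_mem_of_mem_openSegment hy (interior_subset ht) hxG
        ⟨t / (1 + t), 1 / (1 + t), by positivity, by positivity, by field_simp; ring, ?_⟩
      ext i
      simp
      field_simp
      ring
    have : G = W := hG.2.subset.antisymm hWG
    rw [this, h] at hd
    omega
  obtain ⟨f, s, h1, h2⟩ := geometric_hahn_banach_open hW.interior isOpen_interior hG.1 hdisj
  have h3 : ∀ y ∈ W, f y ≤ s := by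
    intro y hy
    have hcl : y ∈ closure (interior W) := by
      rw [hW.closure_interior_eq_closure_of_nonempty_interior hint]
      exact subset_closure hy
    have : closure (interior W) ⊆ {z | f z ≤ s} :=
      closure_minimal (fun z hz => (h1 z hz).le) (isClosed_le f.continuous continuous_const)
    exact this hcl
  have h4 : ∀ y ∈ G, f y = s := fun y hy => le_antisymm (h3 y (hG.2.subset hy)) (h2 y hy)
  let u : Fin 3 → ℝ := fun i => - f (Pi.single i 1)
  have hu : ∀ x, u ⬝ᵥ x = - f x := by
    intro x
    have hx : x = ∑ i, x i • (Pi.single i (1:ℝ) : Fin 3 → ℝ) := by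
      ext j; simp [Finset.sum_apply, Pi.single_apply]
    conv_rhs => rw [hx]
    simp only [map_sum, map_smul, smul_eq_mul, dotProduct, u]
    rw [← Finset.sum_neg_distrib]
    exact Finset.sum_congr rfl fun i _ => by ring
  refine ⟨u, ?_, ?_, ?_⟩
  · intro h0
    obtain ⟨z, hz⟩ := hint
    have e1 := hu z
    have e2 := hu p
    rw [h0, zero_dotProduct] at e1 e2
    have := h1 z hz
    have := h4 p hp
    linarith
  · intro y hy
    rw [hu, map_sub, h4 p hp]
    linarith [h3 y hy]
  · intro y hy
    refine ⟨hG.2.subset hy, ?_⟩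
    rw [hu, map_sub, h4 p hp, h4 y hy]; simp

def KK (A : Fin 3 → Matrix (Fin 4) (Fin 4) ℂ) (u p : Fin 3 → ℝ)
    (hu : ∀ y ∈ JNR A, 0 ≤ u ⬝ᵥ (y - p)) : Submodule ℂ (Fin 4 → ℂ) :=
  LL A (FF (JNR A) u p) (FF_face (JNR_convex A) hu)

lemma form_eq {A : Fin 3 → Matrix (Fin 4) (Fin 4) ℂ} (u p : Fin 3 → ℝ) {ψ : Fin 4 → ℂ}
    (h : ψ ≠ 0) :
    u ⬝ᵥ (QQ A ψ - nn ψ • p) = nn ψ * (u ⬝ᵥ ((nn ψ)⁻¹ • QQ A ψ - p)) := by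
  rw [← smul_eq_mul, ← dotProduct_smul, smul_sub, smul_smul, mul_inv_cancel₀ (nn_pos h).ne',
    one_smul]

lemma form_nonneg {A : Fin 3 → Matrix (Fin 4) (Fin 4) ℂ} {u p : Fin 3 → ℝ}
    (hu : ∀ y ∈ JNR A, 0 ≤ u ⬝ᵥ (y - p)) (ψ : Fin 4 → ℂ) :
    0 ≤ u ⬝ᵥ (QQ A ψ - nn ψ • p) := by
  by_cases h : ψ = 0
  · subst h; simp [QQ_zero, nn_zero]
  · rw [form_eq u p h]
    exact mul_nonneg (nn_nonneg _) (hu _ (QQ_mem h))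

lemma mem_KK {A : Fin 3 → Matrix (Fin 4) (Fin 4) ℂ} {u p : Fin 3 → ℝ}
    {hu : ∀ y ∈ JNR A, 0 ≤ u ⬝ᵥ (y - p)} {ψ : Fin 4 → ℂ} :
    ψ ∈ KK A u p hu ↔ u ⬝ᵥ (QQ A ψ - nn ψ • p) = 0 := by
  unfold KK
  rw [mem_LL]
  by_cases h : ψ = 0
  · subst h; simp [QQ_zero, nn_zero]
  · rw [form_eq u p h, mul_eq_zero, or_iff_right (nn_pos h).ne']
    exact ⟨fun hh => (hh h).2, fun hh _ => ⟨QQ_mem h, hh⟩⟩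

lemma KK_le {A : Fin 3 → Matrix (Fin 4) (Fin 4) ℂ} {u v w p : Fin 3 → ℝ}
    (hu : ∀ y ∈ JNR A, 0 ≤ u ⬝ᵥ (y - p)) (hv : ∀ y ∈ JNR A, 0 ≤ v ⬝ᵥ (y - p))
    (hw : ∀ y ∈ JNR A, 0 ≤ w ⬝ᵥ (y - p)) {a b c : ℝ} (ha : 0 < a) (hb : 0 ≤ b)
    (h : a • u + b • v + c • w = 0) : KK A w p hw ≤ KK A u p hu := by
  intro ψ hψ
  rw [mem_KK] at hψ ⊢
  have e := congrArg (fun x => x ⬝ᵥ (QQ A ψ - nn ψ • p)) h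
  simp only [add_dotProduct, smul_dotProduct, hψ, zero_dotProduct, smul_eq_mul, mul_zero,
    add_zero] at e
  have h1 := mul_nonneg hb (form_nonneg hv ψ)
  have h2 := mul_nonneg ha.le (form_nonneg hu ψ)
  have : a * (u ⬝ᵥ (QQ A ψ - nn ψ • p)) = 0 := by linarith
  exact (mul_eq_zero.1 this).resolve_left ha.ne'

lemma KK_indep {A : Fin 3 → Matrix (Fin 4) (Fin 4) ℂ} {u v w p : Fin 3 → ℝ}
    (hu : ∀ y ∈ JNR A, 0 ≤ u ⬝ᵥ (y - p)) (hv : ∀ y ∈ JNR A, 0 ≤ v ⬝ᵥ (y - p))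
    (hw : ∀ y ∈ JNR A, 0 ≤ w ⬝ᵥ (y - p))
    (ru : Module.finrank ℂ (KK A u p hu) = 3) (rv : Module.finrank ℂ (KK A v p hv) = 3)
    (rw' : Module.finrank ℂ (KK A w p hw) = 3)
    (huv : KK A u p hu ≠ KK A v p hv) (huw : KK A u p hu ≠ KK A w p hw)
    (hvw : KK A v p hv ≠ KK A w p hw) {a b c : ℝ}
    (h : a • u + b • v + c • w = 0) : a = 0 ∧ b = 0 ∧ c = 0 := by
  have key : ∀ a b c : ℝ, a • u + b • v + c • w = 0 → ¬ (0 < a ∧ 0 ≤ b) ∧ ¬ (0 < a ∧ 0 ≤ c) ∧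
      ¬ (0 < b ∧ 0 ≤ a) ∧ ¬ (0 < b ∧ 0 ≤ c) ∧ ¬ (0 < c ∧ 0 ≤ a) ∧ ¬ (0 < c ∧ 0 ≤ b) := by
    intro a b c h
    refine ⟨?_, ?_, ?_, ?_, ?_, ?_⟩ <;> rintro ⟨ha, hb⟩
    · exact huw (Submodule.eq_of_le_of_finrank_eq
        (KK_le hu hv hw ha hb h) (by rw [rw', ru])).symm
    · exact huv (Submodule.eq_of_le_of_finrank_eq
        (KK_le (c := b) hu hw hv ha hb (by rw [← h]; abel)) (by rw [rv, ru])).symm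
    · exact hvw (Submodule.eq_of_le_of_finrank_eq
        (KK_le (c := c) hv hu hw ha hb (by rw [← h]; abel)) (by rw [rv, rw'])).symm
    · exact huv (Submodule.eq_of_le_of_finrank_eq
        (KK_le (c := a) hv hw hu ha hb (by rw [← h]; abel)) (by rw [rv, ru]))
    · exact hvw (Submodule.eq_of_le_of_finrank_eq
        (KK_le (c := b) hw hu hv ha hb (by rw [← h]; abel)) (by rw [rv, rw']))
    · exact huw (Submodule.eq_of_le_of_finrank_eq
        (KK_le (c := a) hw hv hu ha hb (by rw [← h]; abel)) (by rw [ru, rw']))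
  have k1 := key a b c h
  have k2 := key (-a) (-b) (-c) (by
    have : (-a) • u + (-b) • v + (-c) • w = -(a • u + b • v + c • w) := by module
    rw [this, h, neg_zero])
  grind

lemma KK_indep2 {A : Fin 3 → Matrix (Fin 4) (Fin 4) ℂ} {u v p : Fin 3 → ℝ}
    (hu : ∀ y ∈ JNR A, 0 ≤ u ⬝ᵥ (y - p)) (hv : ∀ y ∈ JNR A, 0 ≤ v ⬝ᵥ (y - p))
    (ru : Module.finrank ℂ (KK A u p hu) = 3) (rv : Module.finrank ℂ (KK A v p hv) = 3)
    (huv : KK A u p hu ≠ KK A v p hv) {a b : ℝ}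
    (h : a • u + b • v = 0) : a = 0 ∧ b = 0 := by
  have key : ∀ a b : ℝ, a • u + b • v = 0 → ¬ (0 < a) ∧ ¬ (0 < b) := by
    intro a b h
    refine ⟨fun ha => ?_, fun hb => ?_⟩
    · exact huv (Submodule.eq_of_le_of_finrank_eq
        (KK_le (c := b) hu hu hv ha le_rfl (by rw [← h]; module)) (by rw [rv, ru])).symm
    · exact huv (Submodule.eq_of_le_of_finrank_eq
        (KK_le (c := a) hv hv hu hb le_rfl (by rw [← h]; module)) (by rw [rv, ru]))
  have k1 := key a b h
  have k2 := key (-a) (-b) (by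
    have : (-a) • u + (-b) • v = -(a • u + b • v) := by module
    rw [this, h, neg_zero])
  grind

/-- all data attached to a nonexposed segment through `p` -/
structure Dat (A : Fin 3 → Matrix (Fin 4) (Fin 4) ℂ) (p : Fin 3 → ℝ) (G : Set (Fin 3 → ℝ))
    (u : Fin 3 → ℝ) : Prop where
  face : IsFaceOf (JNR A) G
  nexp : ¬ IsExposedFace (JNR A) G
  line : ∃ d, LineAt G p d
  ne : u ≠ 0
  nrm : ∀ y ∈ JNR A, 0 ≤ u ⬝ᵥ (y - p)
  sub : G ⊆ FF (JNR A) u p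
  rk : Module.finrank ℂ (KK A u p nrm) = 3
  lt : LL A G face < KK A u p nrm

lemma line_not_single {G : Set (Fin 3 → ℝ)} {p d : Fin 3 → ℝ} (h : LineAt G p d)
    (q : Fin 3 → ℝ) : ¬ G ⊆ {q} := by
  intro hs
  have h1 : p = q := hs h.2.1
  have h2 : p + d = q := hs h.2.2.1
  exact h.1 (by simpa [h1] using h2)

lemma exists_dat {A : Fin 3 → Matrix (Fin 4) (Fin 4) ℂ} (h : convDim (JNR A) = 3)
    {G : Set (Fin 3 → ℝ)} (hG : IsFaceOf (JNR A) G) (hd : convDim G = 1)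
    (hne : ¬ IsExposedFace (JNR A) G) {p : Fin 3 → ℝ} (hp : p ∈ G) : ∃ u, Dat A p G u := by
  obtain ⟨u, hu0, hu, hsub⟩ := exists_normal (JNR_convex A) h hG hd hp
  have hpW := hG.2.subset hp
  obtain ⟨d, hl⟩ := lineAt_of_dim hd hp
  have hF := FF_face (JNR_convex A) hu
  have hlt : LL A G hG < KK A u p hu := by
    refine lt_of_le_of_ne (LL_mono hG hF hsub) fun he => hne ?_
    have : FF (JNR A) u p ⊆ G := sub_of_LL_le hF hG he.ge
    rw [hsub.antisymm this]
    exact FF_exposed hpW hu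
  have h2 := two_le_LL hG (line_not_single hl)
  have h3 := Submodule.finrank_lt_finrank_of_lt hlt
  have h4 : KK A u p hu ≠ ⊤ := by
    intro ht
    have hW : IsFaceOf (JNR A) (JNR A) := ⟨JNR_convex A, IsExtreme.refl ℝ _⟩
    have : JNR A ⊆ FF (JNR A) u p := sub_of_LL_le hW hF (le_of_le_of_eq le_top ht.symm)
    exact not_plane h hu0 fun x hx => (this hx).2
  have h5 := Submodule.finrank_lt h4
  simp at h5
  exact ⟨u, hG, hne, ⟨d, hl⟩, hu0, hu, hsub, by omega, hlt⟩

lemma inter_line {A : Fin 3 → Matrix (Fin 4) (Fin 4) ℂ} {p : Fin 3 → ℝ} {G H : Set (Fin 3 → ℝ)}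
    {u v : Fin 3 → ℝ} (D : Dat A p G u) (E : Dat A p H v) (hK : KK A u p D.nrm ≠ KK A v p E.nrm) :
    ∃ d, LineAt (FF (JNR A) (u + v) p) p d ∧ u ⬝ᵥ d = 0 ∧ v ⬝ᵥ d = 0 := by
  obtain ⟨dG, hl⟩ := D.line
  have hpW := D.face.2.subset hl.2.1
  have hx : ∃ x ∈ FF (JNR A) (u + v) p, x ≠ p := by
    by_contra hcon
    push Not at hcon
    have key : ∀ ψ ∈ KK A u p D.nrm ⊓ KK A v p E.nrm, ψ ≠ 0 → (nn ψ)⁻¹ • QQ A ψ = p := by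
      rintro ψ ⟨h1, h2⟩ h0
      apply hcon
      rw [← FF_inter D.nrm E.nrm]
      exact ⟨h1 h0, h2 h0⟩
    have hle : KK A u p D.nrm ⊓ KK A v p E.nrm ≤ LL A G D.face := fun ψ hψ h0 => by
      rw [key ψ hψ h0]; exact hl.2.1
    have h1 := Submodule.finrank_lt_finrank_of_lt D.lt
    have h2 := Submodule.finrank_sup_add_finrank_inf_eq (KK A u p D.nrm) (KK A v p E.nrm)
    have h3 := Submodule.finrank_le (KK A u p D.nrm ⊔ KK A v p E.nrm)
    have h4 := Submodule.finrank_mono hle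
    simp at h3
    rw [D.rk] at h1 h2
    rw [E.rk] at h2
    have he := Submodule.eq_of_le_of_finrank_eq hle (by omega)
    exact line_not_single hl p (sub_singleton D.face p fun ψ hψ => key ψ (by rwa [he]))
  obtain ⟨x, hxF, hxp⟩ := hx
  have ho : ∀ y ∈ FF (JNR A) (u + v) p, u ⬝ᵥ (y - p) = 0 ∧ v ⬝ᵥ (y - p) = 0 := by
    intro y hy
    rw [← FF_inter D.nrm E.nrm] at hy
    exact ⟨hy.1.2, hy.2.2⟩
  have hd : x - p ≠ 0 := sub_ne_zero.2 hxp
  refine ⟨x - p, ⟨hd, ⟨hpW, by simp⟩, by simpa using hxF, fun y hy => ?_⟩, ho x hxF⟩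
  set d := x - p with hdd
  have hdd0 : d ⬝ᵥ d ≠ 0 := fun h => hd (dotProduct_self_eq_zero.1 h)
  set t := (d ⬝ᵥ (y - p)) / (d ⬝ᵥ d) with ht
  refine ⟨t, ?_⟩
  by_contra hne
  have he : y - p - t • d ≠ 0 := fun h => hne (by rw [← sub_eq_zero, ← h]; abel)
  obtain ⟨a, b, c, habc, hr⟩ := dep_of_orth (u := u) (v := v) (w := d) he
    (by rw [dotProduct_sub, dotProduct_smul, (ho y hy).1, (ho x hxF).1]; simp)
    (by rw [dotProduct_sub, dotProduct_smul, (ho y hy).2, (ho x hxF).2]; simp)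
    (by rw [dotProduct_sub, dotProduct_smul, ht, smul_eq_mul, div_mul_cancel₀ _ hdd0, sub_self])
  have hc : c = 0 := by
    have := congrArg (fun z => z ⬝ᵥ d) hr
    have o1 : u ⬝ᵥ d = 0 := (ho x hxF).1
    have o2 : v ⬝ᵥ d = 0 := (ho x hxF).2
    simp only [add_dotProduct, smul_dotProduct, o1, o2, smul_eq_mul,
      mul_zero, zero_add, zero_dotProduct] at this
    exact (mul_eq_zero.1 this).resolve_right hdd0
  subst hc
  obtain ⟨ha, hb⟩ := KK_indep2 D.nrm E.nrm D.rk E.rk hK (a := a) (b := b)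
    (by rw [← hr]; module)
  simp [ha, hb] at habc

lemma ort {W G : Set (Fin 3 → ℝ)} {p u d : Fin 3 → ℝ} (h : G ⊆ FF W u p) (hl : LineAt G p d) :
    u ⬝ᵥ d = 0 := by
  simpa using (h hl.2.2.1).2

lemma sum_nrm {W : Set (Fin 3 → ℝ)} {u v p : Fin 3 → ℝ}
    (hu : ∀ y ∈ W, 0 ≤ u ⬝ᵥ (y - p)) (hv : ∀ y ∈ W, 0 ≤ v ⬝ᵥ (y - p)) :
    ∀ y ∈ W, 0 ≤ (u + v) ⬝ᵥ (y - p) := fun y hy => by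
  rw [add_dotProduct]; exact add_nonneg (hu y hy) (hv y hy)

lemma KK_sub {A : Fin 3 → Matrix (Fin 4) (Fin 4) ℂ} {p : Fin 3 → ℝ} {G H : Set (Fin 3 → ℝ)}
    {u v : Fin 3 → ℝ} (D : Dat A p G u) (E : Dat A p H v) (hK : KK A u p D.nrm = KK A v p E.nrm) :
    H ⊆ FF (JNR A) u p :=
  E.sub.trans (sub_of_LL_le _ _ hK.ge)

lemma two_same {A : Fin 3 → Matrix (Fin 4) (Fin 4) ℂ} {p : Fin 3 → ℝ}
    {G₁ G₂ G₃ : Set (Fin 3 → ℝ)} {u v w : Fin 3 → ℝ}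
    (D₁ : Dat A p G₁ u) (D₂ : Dat A p G₂ v) (D₃ : Dat A p G₃ w)
    (h12 : G₁ ≠ G₂) (h13 : G₁ ≠ G₃) (h23 : G₂ ≠ G₃)
    (hK : KK A u p D₁.nrm = KK A v p D₂.nrm) : False := by
  obtain ⟨d₁, l₁⟩ := D₁.line
  obtain ⟨d₂, l₂⟩ := D₂.line
  obtain ⟨d₃, l₃⟩ := D₃.line
  have hpW := D₁.face.2.subset l₁.2.1
  have o₁ := ort D₁.sub l₁
  have o₂ := ort (KK_sub D₁ D₂ hK) l₂
  by_cases h3 : KK A u p D₁.nrm = KK A w p D₃.nrm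
  · exact three_lines (JNR_convex A) D₁.face D₂.face D₃.face l₁ l₂ l₃ h12 h13 h23 D₁.ne o₁ o₂
      (ort (KK_sub D₁ D₃ h3) l₃)
  · obtain ⟨e, le, oe, -⟩ := inter_line D₁ D₃ h3
    have hs := sum_nrm D₁.nrm D₃.nrm
    have hex := FF_exposed hpW hs
    exact three_lines (JNR_convex A) D₁.face D₂.face (FF_face (JNR_convex A) hs) l₁ l₂ le h12
      (fun h => D₁.nexp (h ▸ hex)) (fun h => D₂.nexp (h ▸ hex)) D₁.ne o₁ o₂ oe

lemma all_diff {A : Fin 3 → Matrix (Fin 4) (Fin 4) ℂ} {p : Fin 3 → ℝ}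
    {G₁ G₂ G₃ : Set (Fin 3 → ℝ)} {u v w : Fin 3 → ℝ}
    (D₁ : Dat A p G₁ u) (D₂ : Dat A p G₂ v) (D₃ : Dat A p G₃ w)
    (k12 : KK A u p D₁.nrm ≠ KK A v p D₂.nrm) (k13 : KK A u p D₁.nrm ≠ KK A w p D₃.nrm)
    (k23 : KK A v p D₂.nrm ≠ KK A w p D₃.nrm) : False := by
  obtain ⟨d₁, l₁⟩ := D₁.line
  have hpW := D₁.face.2.subset l₁.2.1
  obtain ⟨e, le, oe, oe'⟩ := inter_line D₁ D₂ k12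
  obtain ⟨f, lf, of, of'⟩ := inter_line D₁ D₃ k13
  have hs2 := sum_nrm D₁.nrm D₂.nrm
  have hs3 := sum_nrm D₁.nrm D₃.nrm
  by_cases hH : FF (JNR A) (u + v) p = FF (JNR A) (u + w) p
  · have hw : w ⬝ᵥ e = 0 := by
      have h1 : p + e ∈ FF (JNR A) (u + w) p := hH ▸ le.2.2.1
      rw [← FF_inter D₁.nrm D₃.nrm] at h1
      simpa using h1.2.2
    obtain ⟨a, b, c, hne, hr⟩ := dep_of_orth le.1 oe oe' hw
    obtain ⟨ha, hb, hc⟩ := KK_indep D₁.nrm D₂.nrm D₃.nrm D₁.rk D₂.rk D₃.rk k12 k13 k23 hr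
    simp [ha, hb, hc] at hne
  · exact three_lines (JNR_convex A) D₁.face (FF_face (JNR_convex A) hs2)
      (FF_face (JNR_convex A) hs3) l₁ le lf (fun h => D₁.nexp (h ▸ FF_exposed hpW hs2))
      (fun h => D₁.nexp (h ▸ FF_exposed hpW hs3)) hH D₁.ne (ort D₁.sub l₁) oe of

end helpers

/-- the intersection of any three mutually distinct
one-dimensional nonexposed faces of `W` is empty. -/
theorem stmt9 (A : Fin 3 → Matrix (Fin 4) (Fin 4) ℂ)
    (hA : ∀ i, (A i).IsHermitian)
    (hdim : convDim (JNR A) = 3)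
    (G₁ G₂ G₃ : Set (Fin 3 → ℝ))
    (hG₁ : IsFaceOf (JNR A) G₁) (hd₁ : convDim G₁ = 1)
    (hG₁ne : ¬ IsExposedFace (JNR A) G₁)
    (hG₂ : IsFaceOf (JNR A) G₂) (hd₂ : convDim G₂ = 1)
    (hG₂ne : ¬ IsExposedFace (JNR A) G₂)
    (hG₃ : IsFaceOf (JNR A) G₃) (hd₃ : convDim G₃ = 1)
    (hG₃ne : ¬ IsExposedFace (JNR A) G₃)
    (h12 : G₁ ≠ G₂) (h13 : G₁ ≠ G₃) (h23 : G₂ ≠ G₃) :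
    G₁ ∩ G₂ ∩ G₃ = ∅ := by
  rw [Set.eq_empty_iff_forall_notMem]
  rintro p ⟨⟨hp1, hp2⟩, hp3⟩
  obtain ⟨u, D₁⟩ := exists_dat hdim hG₁ hd₁ hG₁ne hp1
  obtain ⟨v, D₂⟩ := exists_dat hdim hG₂ hd₂ hG₂ne hp2
  obtain ⟨w, D₃⟩ := exists_dat hdim hG₃ hd₃ hG₃ne hp3
  by_cases k12 : KK A u p D₁.nrm = KK A v p D₂.nrm
  · exact two_same D₁ D₂ D₃ h12 h13 h23 k12
  by_cases k13 : KK A u p D₁.nrm = KK A w p D₃.nrm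
  · exact two_same D₁ D₃ D₂ h13 h12 h23.symm k13
  by_cases k23 : KK A v p D₂.nrm = KK A w p D₃.nrm
  · exact two_same D₂ D₃ D₁ h23 h12.symm h13.symm k23
  exact all_diff D₁ D₂ D₃ k12 k13 k23
end
end

section
/- Let A₁, A₂, A₃ be hermitian 4×4 complex matrices whose joint numerical range W = W(A₁,A₂,A₃) has dimension 3. Suppose F is a face of W that is an elliptic disk, G is a rank-3 face of W, and F ≠ G. Then F ∩ G is a singleton {q}, where {q} is an exposed face of W; in particular {q} is an exposed face of G. -/
open Matrix ComplexOrder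

noncomputable section

lemma seg_mem {E : Type*} [AddCommGroup E] [Module ℝ E] (g w : E) {ε : ℝ} (h : 0 < ε) :
    g ∈ openSegment ℝ w (g + ε • (g - w)) := by
  refine ⟨ε / (1 + ε), 1 / (1 + ε), by positivity, by positivity, by field_simp; ring, ?_⟩
  have h1 : (1 + ε) ≠ 0 := by positivity
  have : (1 + ε) • ((ε / (1 + ε)) • w + (1 / (1 + ε)) • (g + ε • (g - w))) = (1 + ε) • g := by
    rw [smul_add, smul_smul, smul_smul, mul_div_cancel₀ _ h1, mul_div_cancel₀ _ h1]
    module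
  exact smul_right_injective _ h1 this

lemma dotR_add {d : ℕ} (u x y : Fin d → ℝ) : dotR u (x + y) = dotR u x + dotR u y := by
  simp [dotR, mul_add, Finset.sum_add_distrib]

lemma dotR_smul {d : ℕ} (u x : Fin d → ℝ) (c : ℝ) : dotR u (c • x) = c * dotR u x := by
  simp [dotR, Finset.mul_sum]; exact Finset.sum_congr rfl fun _ _ => by ring

lemma dotR_add_left {d : ℕ} (u v x : Fin d → ℝ) : dotR (u + v) x = dotR u x + dotR v x := by
  simp [dotR, add_mul, Finset.sum_add_distrib]

def dotL {d : ℕ} (u : Fin d → ℝ) : (Fin d → ℝ) →ₗ[ℝ] ℝ where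
  toFun := dotR u
  map_add' := dotR_add u
  map_smul' c x := by simp [dotR_smul]

lemma support {d : ℕ} {W : Set (Fin d → ℝ)} (hW : Convex ℝ W) (hi : (interior W).Nonempty)
    {g : Fin d → ℝ} (hg : g ∉ interior W) :
    ∃ u : Fin d → ℝ, (∀ y ∈ W, dotR u g ≤ dotR u y) ∧ ∃ y ∈ W, dotR u g < dotR u y := by
  obtain ⟨f, hf⟩ := geometric_hahn_banach_open_point hW.interior isOpen_interior hg
  have key : ∀ x, dotR (fun i => - f (Pi.single i 1)) x = - f x := by
    intro x
    conv_rhs => rw [← Finset.univ_sum_single x, map_sum]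
    simp only [dotR, ← Finset.sum_neg_distrib]
    refine Finset.sum_congr rfl fun i _ => ?_
    have : Pi.single i (x i) = x i • (Pi.single i (1:ℝ) : Fin d → ℝ) := by
      rw [← Pi.single_smul]; simp
    rw [this, map_smul]; simp; ring
  refine ⟨fun i => - f (Pi.single i 1), ?_, ?_⟩
  · intro y hy
    rw [key, key, neg_le_neg_iff]
    have h1 : y ∈ closure (interior W) := by
      rw [hW.closure_interior_eq_closure_of_nonempty_interior hi]; exact subset_closure hy
    have : closure (interior W) ⊆ {y | f y ≤ f g} :=
      closure_minimal (fun z hz => (hf z hz).le) (isClosed_le f.continuous continuous_const)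
    exact this h1
  · obtain ⟨y, hy⟩ := hi
    refine ⟨y, interior_subset hy, ?_⟩
    rw [key, key, neg_lt_neg_iff]; exact hf y hy

lemma interior_extreme {d : ℕ} {W G : Set (Fin d → ℝ)} (hG : IsExtreme ℝ W G)
    {g : Fin d → ℝ} (hg : g ∈ interior W) (hgG : g ∈ G) : W ⊆ G := by
  intro w hw
  have hc : Filter.Tendsto (fun t : ℝ => g + t • (g - w)) (nhdsWithin 0 (Set.Ioi 0)) (nhds g) := by
    have : Continuous (fun t : ℝ => g + t • (g - w)) := by fun_prop
    have h := this.tendsto 0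
    simp only [zero_smul, add_zero] at h
    exact h.mono_left nhdsWithin_le_nhds
  have h1 := hc.eventually (mem_interior_iff_mem_nhds.1 hg)
  obtain ⟨ε, h2, h3⟩ := (h1.and self_mem_nhdsWithin).exists
  exact hG.2 hw h2 hgG (seg_mem g w h3)

lemma disk_move (m d : Fin 2 → ℝ) (hm : m 0 ^ 2 + m 1 ^ 2 < 1) :
    ∃ ε : ℝ, 0 < ε ∧ m + ε • d ∈ unitDisk2 := by
  have hc : Filter.Tendsto (fun t : ℝ => (m 0 + t * d 0) ^ 2 + (m 1 + t * d 1) ^ 2)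
      (nhdsWithin 0 (Set.Ioi 0)) (nhds (m 0 ^ 2 + m 1 ^ 2)) := by
    have : Continuous (fun t : ℝ => (m 0 + t * d 0) ^ 2 + (m 1 + t * d 1) ^ 2) := by fun_prop
    have h := this.tendsto 0
    simp only [zero_mul, add_zero] at h
    exact h.mono_left nhdsWithin_le_nhds
  obtain ⟨ε, h2, h3⟩ := ((hc.eventually (gt_mem_nhds hm)).and self_mem_nhdsWithin).exists
  refine ⟨ε, h3, ?_⟩
  simpa [unitDisk2] using h2.le

/-- interior point of the disk lying in an extreme set. -/
lemma disk_extreme {W X : Set (Fin 3 → ℝ)} (hX : IsExtreme ℝ W X)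
    (f : (Fin 2 → ℝ) →ᵃ[ℝ] (Fin 3 → ℝ)) (hfW : f '' unitDisk2 ⊆ W) (m c : Fin 2 → ℝ)
    (hm : m 0 ^ 2 + m 1 ^ 2 < 1) (hmX : f m ∈ X) (hc : f c ∈ W) : f c ∈ X := by
  obtain ⟨ε, h, h2⟩ := disk_move m (m - c) hm
  refine hX.2 hc (hfW ⟨_, h2, rfl⟩) hmX ?_
  have : f (m + ε • (m - c)) = f m + ε • (f m - f c) := by
    have h1 : f (ε • (m - c) +ᵥ m) = _ := f.map_vadd m (ε • (m - c))
    rw [add_comm, ← vadd_eq_add, h1, map_smul, ← vsub_eq_sub m c, f.linearMap_vsub]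
    simp [add_comm]
  rw [this]; exact seg_mem _ _ h

lemma disk_zero : (0 : Fin 2 → ℝ) ∈ unitDisk2 := by simp [unitDisk2]

lemma plane_sub {W : Set (Fin 3 → ℝ)} (f : (Fin 2 → ℝ) →ᵃ[ℝ] (Fin 3 → ℝ))
    (hf : Function.Injective f) (hX : IsExtreme ℝ W (f '' unitDisk2)) (u : Fin 3 → ℝ) (l : ℝ)
    (hu : dotL u ≠ 0) (hFu : ∀ x ∈ f '' unitDisk2, dotR u x = l) (x : Fin 3 → ℝ) (hx : x ∈ W)
    (hxu : dotR u x = l) : x ∈ f '' unitDisk2 := by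
  have hle : LinearMap.range f.linear ≤ LinearMap.ker (dotL u) := by
    rintro _ ⟨w, rfl⟩
    obtain ⟨ε, h, h2⟩ := disk_move 0 w (by simp)
    have h3 := hFu _ ⟨_, h2, rfl⟩
    have h4 := hFu _ ⟨_, disk_zero, rfl⟩
    have h1 : f (ε • w +ᵥ (0 : Fin 2 → ℝ)) = _ := f.map_vadd 0 (ε • w)
    rw [add_comm, ← vadd_eq_add, h1, map_smul, vadd_eq_add, dotR_add, dotR_smul, h4] at h3
    have : ε * dotR u (f.linear w) = 0 := by linarith
    exact (mul_eq_zero.1 this).resolve_left h.ne'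
  have heq : LinearMap.range f.linear = LinearMap.ker (dotL u) := by
    refine Submodule.eq_of_le_of_finrank_eq hle ?_
    have h1 := Module.Dual.finrank_ker_add_one_of_ne_zero hu
    have h2 := LinearMap.finrank_range_of_inj (f.linear_injective_iff.2 hf)
    simp at h1 h2
    omega
  have : x - f 0 ∈ LinearMap.ker (dotL u) := by
    rw [LinearMap.mem_ker, map_sub]
    have h4 := hFu _ ⟨_, disk_zero, rfl⟩
    change dotR u x - dotR u (f 0) = 0
    rw [h4, hxu]; ring
  rw [← heq] at this
  obtain ⟨w, hw⟩ := this
  have h1 : f (w +ᵥ (0 : Fin 2 → ℝ)) = _ := f.map_vadd 0 w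
  have h2 : f w = x := by
    rw [vadd_eq_add, add_zero] at h1; rw [h1, hw]; simp
  rw [← h2] at hx ⊢
  exact disk_extreme hX f hX.1 0 w (by simp) ⟨_, disk_zero, rfl⟩ hx

abbrev M4 := Matrix (Fin 4) (Fin 4) ℂ

lemma wpt_add_s10 (A : Fin 3 → M4) (M N : M4) : wpt A (M + N) = wpt A M + wpt A N := by
  ext i; simp [wpt, Matrix.add_mul]

lemma wpt_smul_s10 (A : Fin 3 → M4) (c : ℝ) (M : M4) : wpt A ((c : ℂ) • M) = c • wpt A M := by
  ext i; simp [wpt]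

lemma psd_smul {M : M4} (hM : M.PosSemidef) {c : ℝ} (hc : 0 ≤ c) : ((c : ℂ) • M).PosSemidef :=
  hM.smul (by exact_mod_cast hc)

lemma tr_real {M : M4} (hM : M.PosSemidef) : M.trace = ((M.trace.re : ℝ) : ℂ) := by
  have h := Complex.nonneg_iff.1 hM.trace_nonneg
  apply Complex.ext <;> simp [← h.2]

lemma tr_pos {M : M4} (hM : M.PosSemidef) (h0 : M ≠ 0) : 0 < M.trace.re := by
  have h := Complex.nonneg_iff.1 hM.trace_nonneg
  refine lt_of_le_of_ne h.1 fun h1 => h0 (hM.trace_eq_zero_iff.1 ?_)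
  rw [tr_real hM, ← h1]; simp

/-- normalization -/
def st (M : M4) : M4 := ((M.trace.re⁻¹ : ℝ) : ℂ) • M

lemma st_density {M : M4} (hM : M.PosSemidef) (h0 : M ≠ 0) : IsDensity (st M) := by
  have h := tr_pos hM h0
  refine ⟨psd_smul hM (by positivity), ?_⟩
  rw [st, trace_smul, tr_real hM]
  simp only [Complex.ofReal_re, smul_eq_mul]
  rw [← Complex.ofReal_mul, inv_mul_cancel₀ h.ne']; simp

lemma st_of_density {M : M4} (hM : IsDensity M) : st M = M := by
  simp [st, hM.2]

lemma wpt_st (A : Fin 3 → M4) {M : M4} (hM : M.PosSemidef) (h0 : M ≠ 0) :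
    wpt A M = M.trace.re • wpt A (st M) := by
  have h := tr_pos hM h0
  rw [st, wpt_smul_s10, smul_smul, mul_inv_cancel₀ h.ne', one_smul]

lemma jnr_convex (A : Fin 3 → M4) : Convex ℝ (JNR A) := by
  rintro _ ⟨r, hr, rfl⟩ _ ⟨s, hs, rfl⟩ a b ha hb hab
  refine ⟨(a : ℂ) • r + (b : ℂ) • s, ⟨(psd_smul hr.1 ha).add (psd_smul hs.1 hb), ?_⟩, ?_⟩
  · rw [trace_add, trace_smul, trace_smul, hr.2, hs.2]; simp; exact_mod_cast hab
  · rw [wpt_add_s10, wpt_smul_s10, wpt_smul_s10]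

lemma wpt_st_add (A : Fin 3 → M4) {M N : M4} (hM : M.PosSemidef) (hN : N.PosSemidef) (h0 : M ≠ 0)
    (hN0 : N ≠ 0) : wpt A (st (M + N)) =
      (M.trace.re / (M.trace.re + N.trace.re)) • wpt A (st M) +
      (N.trace.re / (M.trace.re + N.trace.re)) • wpt A (st N) := by
  conv_lhs => rw [st, wpt_smul_s10, wpt_add_s10, wpt_st A hM h0, wpt_st A hN hN0, trace_add,
    Complex.add_re, smul_add, smul_smul, smul_smul]
  congr 2 <;> ring

lemma cone_face (A : Fin 3 → M4) {F : Set (Fin 3 → ℝ)} (hF : IsExtreme ℝ (JNR A) F)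
    {M N : M4} (hM : M.PosSemidef) (hN : N.PosSemidef) (h0 : M ≠ 0)
    (h : wpt A (st (M + N)) ∈ F) : wpt A (st M) ∈ F := by
  by_cases hN0 : N = 0
  · simpa [hN0] using h
  have hm := tr_pos hM h0
  have hn := tr_pos hN hN0
  refine hF.2 (x := wpt A (st M)) ⟨_, st_density hM h0, rfl⟩ (y := wpt A (st N))
    ⟨_, st_density hN hN0, rfl⟩ h ?_
  refine ⟨M.trace.re / (M.trace.re + N.trace.re), N.trace.re / (M.trace.re + N.trace.re),
    by positivity, by positivity, by field_simp, ?_⟩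
  exact (wpt_st_add A hM hN h0 hN0).symm

/-- pure (unnormalized) state -/
def pu (x : Fin 4 → ℂ) : M4 := vecMulVec x (star x)

lemma pu_psd (x) : (pu x).PosSemidef := posSemidef_vecMulVec_self_star x

lemma pu_ne {x : Fin 4 → ℂ} (hx : x ≠ 0) : pu x ≠ 0 := by
  intro h
  apply hx
  ext i
  have := congrFun (congrFun h i) i
  simpa [pu, vecMulVec_apply] using this

lemma psd_factor {M : M4} (hM : M.PosSemidef) : ∃ B : M4, M = Bᴴ * B := by
  open scoped MatrixOrder in
  obtain ⟨B, hB⟩ := CStarAlgebra.nonneg_iff_eq_star_mul_self.1 hM.nonneg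
  exact ⟨B, hB⟩

lemma sum_pu (B : M4) : Bᴴ * B = ∑ k, pu (star (B k)) := by
  ext i j
  simp [pu, mul_apply, vecMulVec_apply, Matrix.sum_apply]

/-- every face contains a pure state -/
lemma exists_pure (A : Fin 3 → M4) {F : Set (Fin 3 → ℝ)} (hF : IsExtreme ℝ (JNR A) F)
    (hne : F.Nonempty) : ∃ x, x ≠ 0 ∧ wpt A (st (pu x)) ∈ F := by
  obtain ⟨p, hp⟩ := hne
  obtain ⟨r, hr, rfl⟩ := hF.1 hp
  obtain ⟨B, hB⟩ := psd_factor hr.1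
  have : ∃ k, star (B k) ≠ 0 := by
    by_contra! h
    have hz : r = 0 := by rw [hB, sum_pu]; simp [h, pu]
    have := hr.2
    simp [hz] at this
  obtain ⟨k, hk⟩ := this
  refine ⟨_, hk, cone_face A hF (pu_psd _)
    (posSemidef_sum (Finset.univ.erase k) fun j _ => pu_psd (star (B j))) (pu_ne hk) ?_⟩
  rw [Finset.add_sum_erase _ (fun k => pu (star (B k))) (Finset.mem_univ k), ← sum_pu, ← hB,
    st_of_density hr]
  exact hp

lemma pu_smul (c : ℂ) (x : Fin 4 → ℂ) : pu (c • x) = ((‖c‖ ^ 2 : ℝ) : ℂ) • pu x := by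
  ext i j
  simp only [pu, vecMulVec_apply, Pi.smul_apply, Pi.star_apply, smul_eq_mul, star_mul', Matrix.smul_apply]
  have := Complex.mul_conj' c
  push_cast
  rw [← this]
  simp only [Complex.star_def]
  ring

lemma st_smul {c : ℝ} (hc : 0 < c) (M : M4) : st ((c : ℂ) • M) = st M := by
  simp only [st, trace_smul, smul_eq_mul, Complex.re_ofReal_mul, smul_smul, ← Complex.ofReal_mul]
  congr 2
  rw [mul_inv]; field_simp

lemma st_pu_smul {c : ℂ} (hc : c ≠ 0) (x : Fin 4 → ℂ) : st (pu (c • x)) = st (pu x) := by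
  rw [pu_smul, st_smul]; positivity

/-- span of two pure states in a face -/
lemma pure_add (A : Fin 3 → M4) {F : Set (Fin 3 → ℝ)} (hF : IsFaceOf (JNR A) F)
    {x y : Fin 4 → ℂ} (hx : x ≠ 0) (hy : y ≠ 0) (hxF : wpt A (st (pu x)) ∈ F)
    (hyF : wpt A (st (pu y)) ∈ F) (hxy : x + y ≠ 0) : wpt A (st (pu (x + y))) ∈ F := by
  have hpar : pu (x + y) + pu (x - y) = ((2 : ℝ) : ℂ) • (pu x + pu y) := by
    ext i j
    simp [pu, vecMulVec_apply]; ring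
  refine cone_face A hF.2 (pu_psd _) (pu_psd (x - y)) (pu_ne hxy) ?_
  rw [hpar, st_smul (by norm_num)]
  have hm := tr_pos (pu_psd x) (pu_ne hx)
  have hn := tr_pos (pu_psd y) (pu_ne hy)
  rw [wpt_st_add A (pu_psd x) (pu_psd y) (pu_ne hx) (pu_ne hy)]
  exact hF.1 hxF hyF (by positivity) (by positivity) (by field_simp)

lemma mul_zero_of_tr {M B : M4} (hM : M.PosSemidef) (hB : B.PosSemidef)
    (h : (M * B).trace.re = 0) : B * M = 0 := by
  obtain ⟨C, rfl⟩ := psd_factor hM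
  obtain ⟨D, rfl⟩ := psd_factor hB
  have e : (Cᴴ * C * (Dᴴ * D)).trace = ((D * Cᴴ)ᴴ * (D * Cᴴ)).trace := by
    rw [Matrix.mul_assoc, trace_mul_comm]
    simp [Matrix.mul_assoc]
  rw [e] at h
  have hp : ((D * Cᴴ)ᴴ * (D * Cᴴ)).PosSemidef := posSemidef_conjTranspose_mul_self _
  have h1 : D * Cᴴ = 0 := by
    rw [← trace_conjTranspose_mul_self_eq_zero_iff, tr_real hp, h]; simp
  calc Dᴴ * D * (Cᴴ * C) = Dᴴ * (D * Cᴴ) * C := by simp only [Matrix.mul_assoc]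
    _ = 0 := by rw [h1]; simp

def Bm (A : Fin 3 → M4) (u : Fin 3 → ℝ) (l : ℝ) : M4 := (∑ i, (u i : ℂ) • A i) - (l : ℂ) • (1 : M4)

lemma Bm_tr (A : Fin 3 → M4) (u : Fin 3 → ℝ) (l : ℝ) {r : M4} (hr : IsDensity r) :
    (r * Bm A u l).trace.re = dotR u (wpt A r) - l := by
  simp only [Bm, Matrix.mul_sub, Matrix.mul_sum, Matrix.mul_smul, trace_sub, trace_sum, trace_smul,
    Matrix.mul_one, hr.2, dotR, wpt]
  simp

lemma Bm_herm (A : Fin 3 → M4) (hA : ∀ i, (A i).IsHermitian) (u : Fin 3 → ℝ) (l : ℝ) :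
    (Bm A u l).IsHermitian := by
  unfold IsHermitian Bm
  simp [conjTranspose_sum, fun i => (hA i).eq]

lemma Bm_psd (A : Fin 3 → M4) (hA : ∀ i, (A i).IsHermitian) (u : Fin 3 → ℝ) (l : ℝ)
    (h : ∀ y ∈ JNR A, l ≤ dotR u y) : (Bm A u l).PosSemidef := by
  refine .of_dotProduct_mulVec_nonneg (Bm_herm A hA u l) fun x => ?_
  by_cases hx : x = 0
  · simp [hx]
  have e : star x ⬝ᵥ (Bm A u l *ᵥ x) = (pu x * Bm A u l).trace := by
    rw [pu, trace_mul_comm, mul_vecMulVec, trace_vecMulVec, dotProduct_comm]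
  have hd := st_density (pu_psd x) (pu_ne hx)
  have h1 := Bm_tr A u l hd
  have h2 := h _ ⟨_, hd, rfl⟩
  rw [Complex.nonneg_iff]
  constructor
  · rw [e]
    have h3 : 0 ≤ (st (pu x) * Bm A u l).trace.re := by linarith
    rw [st, Matrix.smul_mul, trace_smul, smul_eq_mul, Complex.re_ofReal_mul] at h3
    exact nonneg_of_mul_nonneg_right h3 (inv_pos.2 (tr_pos (pu_psd x) (pu_ne hx)))
  · exact ((Bm_herm A hA u l).im_star_dotProduct_mulVec_self x).symm

/-- kernel of the rank-3 projection -/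
lemma ker_P {P : M4} (h2 : P * P = P) (h3 : P.rank = 3) :
    ∃ v : Fin 4 → ℂ, v ≠ 0 ∧ P *ᵥ v = 0 ∧ ∀ x, ∃ c : ℂ, x = P *ᵥ x + c • v := by
  have hr := P.mulVecLin.finrank_range_add_finrank_ker
  have h4 : Module.finrank ℂ (LinearMap.range P.mulVecLin) = 3 := h3
  have h5 : Module.finrank ℂ (LinearMap.ker P.mulVecLin) = 1 := by
    simp at hr; omega
  obtain ⟨⟨v, hv⟩, hv0, hall⟩ := finrank_eq_one_iff'.1 h5
  refine ⟨v, fun h => hv0 (by ext1; exact h), by simpa using hv, fun x => ?_⟩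
  have hm : x - P *ᵥ x ∈ LinearMap.ker P.mulVecLin := by
    simp [mulVec_sub, h2]
  obtain ⟨c, hc⟩ := hall ⟨_, hm⟩
  refine ⟨c, ?_⟩
  have := congrArg Subtype.val hc
  simp at this
  rw [this]; simp

lemma rank3_exposed (A : Fin 3 → M4) (hA : ∀ i, (A i).IsHermitian) {G : Set (Fin 3 → ℝ)}
    (hG : IsRank3Face A G) (hi : (interior (JNR A)).Nonempty) :
    ∃ u : Fin 3 → ℝ, dotL u ≠ 0 ∧ ∃ l, (∀ y ∈ JNR A, l ≤ dotR u y) ∧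
      ∀ y ∈ JNR A, (y ∈ G ↔ dotR u y = l) := by
  obtain ⟨_, hGf, P, hP1, hP2, hP3, hP⟩ := hG
  obtain ⟨v, hv0, hPv, hx⟩ := ker_P hP2 hP3
  have hPp : P.PosSemidef := by
    have := posSemidef_conjTranspose_mul_self P
    rwa [hP1, hP2] at this
  have hP0 : P ≠ 0 := by rintro rfl; simp at hP3
  have hd := st_density hPp hP0
  have hg : wpt A (st P) ∈ G := by
    rw [hP _ hd]; simp [st, hP2]
  have hgi : wpt A (st P) ∉ interior (JNR A) := by
    intro h
    have hd' := st_density (pu_psd v) (pu_ne hv0)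
    have h1 := (hP _ hd').1 (interior_extreme hGf.2 h hg ⟨_, hd', rfl⟩)
    have h2 : P * st (pu v) = 0 := by simp [st, pu, mul_vecMulVec, hPv]
    rw [h2] at h1
    have := hd'.2
    rw [← h1] at this
    simp at this
  obtain ⟨u, hu1, y, hy, hu2⟩ := support (jnr_convex A) hi hgi
  set l := dotR u (wpt A (st P)) with hl
  have hB := Bm_psd A hA u l hu1
  have hBP : Bm A u l * P = 0 := by
    have h1 := mul_zero_of_tr hd.1 hB (by rw [Bm_tr A u l hd, hl, sub_self])
    rw [st, Matrix.mul_smul] at h1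
    refine (smul_eq_zero.1 h1).resolve_left ?_
    have := tr_pos hPp hP0
    exact_mod_cast (inv_pos.2 this).ne'
  have hBx : ∀ x, Bm A u l *ᵥ (P *ᵥ x) = 0 := fun x => by rw [mulVec_mulVec, hBP, zero_mulVec]
  have hBv : Bm A u l *ᵥ v ≠ 0 := by
    intro h
    have hB0 : Bm A u l = 0 := by
      apply Matrix.toLin'.injective
      ext1 i
      ext1
      simp only [LinearMap.comp_apply, toLin'_apply, zero_mulVec]
      obtain ⟨c, hc⟩ := hx (LinearMap.single ℂ (fun _ => ℂ) i 1)
      rw [hc, mulVec_add, hBx, mulVec_smul, h]; simp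
    obtain ⟨r, hr, rfl⟩ := hy
    have := Bm_tr A u l hr
    rw [hB0] at this
    simp at this
    linarith
  refine ⟨u, ?_, l, hu1, ?_⟩
  · intro h
    have h1 : ∀ x, dotR u x = 0 := fun x => LinearMap.congr_fun h x
    rw [hl, h1, h1] at hu2; exact lt_irrefl _ hu2
  · rintro _ ⟨r, hr, rfl⟩
    rw [hP r hr]
    have e := Bm_tr A u l hr
    constructor
    · intro h
      have h1 : r * Bm A u l = 0 := by
        have : P * Bm A u l = 0 := by
          have := congrArg conjTranspose hBP
          rwa [conjTranspose_mul, hP1, (Bm_herm A hA u l).eq, conjTranspose_zero] at this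
        rw [← h, Matrix.mul_assoc, this, Matrix.mul_zero]
      rw [h1] at e; simp at e; linarith
    · intro h
      have h1 := mul_zero_of_tr hr.1 hB (by rw [e, h, sub_self])
      have h2 : P * r = r := by
        apply Matrix.toLin'.injective
        refine LinearMap.ext fun z => ?_
        simp only [toLin'_apply]
        obtain ⟨c, hc⟩ := hx (r *ᵥ z)
        have h3 : Bm A u l *ᵥ (r *ᵥ z) = 0 := by rw [mulVec_mulVec, h1, zero_mulVec]
        rw [hc, mulVec_add, hBx, mulVec_smul, zero_add] at h3
        have hc0 := (smul_eq_zero.1 h3).resolve_right hBv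
        rw [hc0] at hc
        rw [← mulVec_mulVec]; rw [zero_smul, add_zero] at hc; exact hc.symm
      have h4 : r * P = r := by
        have := congrArg conjTranspose h2
        rwa [conjTranspose_mul, hP1, hr.1.1.eq] at this
      rw [h2, h4]

lemma exposed_extreme {W : Set (Fin 3 → ℝ)} (u : Fin 3 → ℝ) (l : ℝ)
    (h : ∀ y ∈ W, l ≤ dotR u y) : IsExtreme ℝ W {x ∈ W | dotR u x = l} := by
  refine ⟨fun x hx => hx.1, ?_⟩
  rintro x hx y hy z ⟨_, hz⟩ ⟨a, b, ha, hb, hab, rfl⟩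
  refine ⟨hx, le_antisymm ?_ (h x hx)⟩
  rw [dotR_add, dotR_smul, dotR_smul] at hz
  have h1 := h y hy
  by_contra! hlt
  have h2 : a * l < a * dotR u x := by gcongr
  have h3 : b * l ≤ b * dotR u y := by gcongr
  have h4 : l = a * l + b * l := by rw [← add_mul, hab, one_mul]
  linarith

lemma disk_exposed {W : Set (Fin 3 → ℝ)} (hW : Convex ℝ W) (hi : (interior W).Nonempty)
    (hdim : convDim W = 3)
    (f : (Fin 2 → ℝ) →ᵃ[ℝ] (Fin 3 → ℝ)) (hf : Function.Injective f)
    (hX : IsExtreme ℝ W (f '' unitDisk2)) :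
    ∃ u : Fin 3 → ℝ, ∃ l, (∀ y ∈ W, l ≤ dotR u y) ∧
      ∀ y ∈ W, (y ∈ f '' unitDisk2 ↔ dotR u y = l) := by
  have h0 : f 0 ∈ f '' unitDisk2 := ⟨_, disk_zero, rfl⟩
  have hni : f 0 ∉ interior W := by
    intro h
    have hs := interior_extreme hX h h0
    have hle : (affineSpan ℝ W).direction ≤ LinearMap.range f.linear := by
      rw [direction_affineSpan, vectorSpan_def, Submodule.span_le]
      rintro _ ⟨x, hx, y, hy, rfl⟩
      obtain ⟨a, _, rfl⟩ := hs hx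
      obtain ⟨b, _, rfl⟩ := hs hy
      exact ⟨a -ᵥ b, f.linearMap_vsub a b⟩
    have h1 := Submodule.finrank_mono hle
    have h2 := LinearMap.finrank_range_le f.linear
    unfold convDim at hdim
    simp at h2
    omega
  obtain ⟨u, hu1, y, hy, hu2⟩ := support hW hi hni
  have hFu : ∀ x ∈ f '' unitDisk2, dotR u x = dotR u (f 0) := by
    rintro _ ⟨c, hc, rfl⟩
    exact (disk_extreme (exposed_extreme u _ hu1) f hX.1 0 c (by simp) ⟨hX.1 h0, rfl⟩
      (hX.1 ⟨_, hc, rfl⟩)).2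
  refine ⟨u, _, hu1, fun x hx => ⟨hFu x, plane_sub f hf hX u _ ?_ hFu x hx⟩⟩
  intro h
  have h1 : ∀ x, dotR u x = 0 := fun x => LinearMap.congr_fun h x
  rw [h1, h1] at hu2; exact lt_irrefl _ hu2

lemma disk_pt (f : (Fin 2 → ℝ) →ᵃ[ℝ] (Fin 3 → ℝ)) (hf : Function.Injective f) (k : ℝ)
    (hk : k ^ 2 = 1) : IsExtreme ℝ (f '' unitDisk2) {f ![k, 0]} := by
  constructor
  · rintro _ rfl
    exact ⟨_, by simp [unitDisk2, hk], rfl⟩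
  rintro _ ⟨b, hb, rfl⟩ _ ⟨c, hc, rfl⟩ _ rfl ⟨s, t, hs, ht, hst, h⟩
  rw [← Convex.combo_affine_apply hst] at h
  have h := hf h
  have h0 := congrFun h 0
  simp [unitDisk2] at h0 hb hc
  have hb1 : k * b 0 ≤ 1 := by nlinarith [sq_nonneg (k - b 0), sq_nonneg (b 1)]
  have hc1 : k * c 0 ≤ 1 := by nlinarith [sq_nonneg (k - c 0), sq_nonneg (c 1)]
  have hsum : s * (k * b 0) + t * (k * c 0) = 1 := by rw [← hk, ← h0]; ring_nf
  have hb2 : k * b 0 = 1 := by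
    by_contra hne
    have : k * b 0 < 1 := lt_of_le_of_ne hb1 hne
    nlinarith
  have hb3 : b 0 = k := by
    calc b 0 = k ^ 2 * b 0 := by rw [hk, one_mul]
      _ = k * (k * b 0) := by ring
      _ = k := by rw [hb2, mul_one]
  have hb4 : b 1 = 0 := by
    rw [hb3, hk] at hb
    have : b 1 ^ 2 = 0 := le_antisymm (by linarith) (sq_nonneg _)
    exact pow_eq_zero_iff (by norm_num) |>.1 this
  have : b = ![k, 0] := by ext i; fin_cases i <;> simp [hb3, hb4]
  rw [this]; rfl

lemma inter_nonempty (A : Fin 3 → M4) (f : (Fin 2 → ℝ) →ᵃ[ℝ] (Fin 3 → ℝ))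
    (hf : Function.Injective f) (hF : IsFaceOf (JNR A) (f '' unitDisk2)) {G : Set (Fin 3 → ℝ)}
    (hG : IsRank3Face A G) : (f '' unitDisk2 ∩ G).Nonempty := by
  obtain ⟨_, hGf, P, hP1, hP2, hP3, hP⟩ := hG
  obtain ⟨v, hv0, hPv, hx⟩ := ker_P hP2 hP3
  suffices h : ∃ z, z ≠ 0 ∧ P *ᵥ z = z ∧ wpt A (st (pu z)) ∈ f '' unitDisk2 by
    obtain ⟨z, hz0, hPz, hz⟩ := h
    refine ⟨_, hz, (hP _ (st_density (pu_psd z) (pu_ne hz0))).2 ?_⟩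
    have : star z ᵥ* P = star z := by
      have := congrArg star hPz
      rwa [star_mulVec, hP1] at this
    rw [st, Matrix.mul_smul, Matrix.smul_mul, pu, mul_vecMulVec, vecMulVec_mul, hPz, this]
  have e1 := hF.2.trans (disk_pt f hf 1 (by norm_num))
  have e2 := hF.2.trans (disk_pt f hf (-1) (by norm_num))
  obtain ⟨x, hx0, hxe⟩ := exists_pure A e1 (Set.singleton_nonempty _)
  obtain ⟨y, hy0, hye⟩ := exists_pure A e2 (Set.singleton_nonempty _)
  have hxF : wpt A (st (pu x)) ∈ f '' unitDisk2 := (disk_pt f hf 1 (by norm_num)).1 hxe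
  have hyF : wpt A (st (pu y)) ∈ f '' unitDisk2 := (disk_pt f hf (-1) (by norm_num)).1 hye
  obtain ⟨c, hc⟩ := hx x
  obtain ⟨d, hd⟩ := hx y
  by_cases hc0 : c = 0
  · exact ⟨x, hx0, by rw [hc0, zero_smul, add_zero] at hc; exact hc.symm, hxF⟩
  by_cases hd0 : d = 0
  · exact ⟨y, hy0, by rw [hd0, zero_smul, add_zero] at hd; exact hd.symm, hyF⟩
  have hz : d • x + (-c) • y ≠ 0 := by
    intro h
    have h1 : d • x = c • y := by
      rw [neg_smul] at h; exact add_neg_eq_zero.1 h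
    have h2 : st (pu x) = st (pu y) := by
      rw [← st_pu_smul hd0 x, h1, st_pu_smul hc0]
    rw [h2, hye] at hxe
    have h3 := congrFun (hf hxe) 0
    simp at h3
    norm_num at h3
  refine ⟨_, hz, ?_, pure_add A hF (smul_ne_zero hd0 hx0) (smul_ne_zero (neg_ne_zero.2 hc0) hy0)
    ?_ ?_ hz⟩
  · have hx' : P *ᵥ x = x - c • v := eq_sub_of_add_eq hc.symm
    have hy' : P *ᵥ y = y - d • v := eq_sub_of_add_eq hd.symm
    rw [mulVec_add, mulVec_smul, mulVec_smul, hx', hy']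
    module
  · rwa [st_pu_smul hd0]
  · rwa [st_pu_smul (neg_ne_zero.2 hc0)]

/-- an elliptic face and a different rank-3 face intersect in a
single point, which is an exposed face of `W` and of the rank-3 face. -/
theorem stmt10 (A : Fin 3 → Matrix (Fin 4) (Fin 4) ℂ)
    (hA : ∀ i, (A i).IsHermitian)
    (hdim : convDim (JNR A) = 3)
    (F G : Set (Fin 3 → ℝ))
    (hF : IsFaceOf (JNR A) F) (hFe : IsEllipticDisk F)
    (hG : IsRank3Face A G) (hFG : F ≠ G) :
    ∃ q, F ∩ G = {q} ∧ IsExposedFace (JNR A) {q} ∧ IsExposedFace G {q} := by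
  obtain ⟨f, hf, rfl⟩ := hFe
  have hW := jnr_convex A
  have hGA := hG.2.1
  have hi : (interior (JNR A)).Nonempty := by
    rw [hW.interior_nonempty_iff_affineSpan_eq_top]
    have hne : (affineSpan ℝ (JNR A) : Set (Fin 3 → ℝ)).Nonempty :=
      (hG.1.mono hGA.2.1).mono (subset_affineSpan ℝ _)
    rw [← AffineSubspace.direction_eq_top_iff_of_nonempty hne]
    apply Submodule.eq_top_of_finrank_eq
    unfold convDim at hdim
    rw [hdim]; simp
  obtain ⟨u, lu, hu1, hu2⟩ := disk_exposed hW hi hdim f hf hF.2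
  obtain ⟨v, hv0, lv, hv1, hv2⟩ := rank3_exposed A hA hG hi
  obtain ⟨q, hqF, hqG⟩ := inter_nonempty A f hf hF hG
  have hnot : ¬ f '' unitDisk2 ⊆ G := by
    intro h
    apply hFG
    refine Set.Subset.antisymm h fun x hx => ?_
    have hxW := hGA.2.1 hx
    exact plane_sub f hf hF.2 v lv hv0 (fun y hy => (hv2 y (hF.2.1 hy)).1 (h hy)) x hxW
      ((hv2 x hxW).1 hx)
  have hsing : f '' unitDisk2 ∩ G = {q} := by
    refine Set.eq_singleton_iff_unique_mem.2 ⟨⟨hqF, hqG⟩, ?_⟩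
    rintro p ⟨⟨a, ha, rfl⟩, hpG⟩
    obtain ⟨b, hb, rfl⟩ := hqF
    by_contra hne
    have hab : a ≠ b := fun h => hne (by rw [h])
    apply hnot
    rintro _ ⟨c, hc, rfl⟩
    have hmid : f ((1 / 2 : ℝ) • a + (1 / 2 : ℝ) • b) ∈ G := by
      rw [Convex.combo_affine_apply (by norm_num)]
      exact hGA.1 hpG hqG (by norm_num) (by norm_num) (by norm_num)
    refine disk_extreme hGA.2 f hF.2.1 _ c ?_ hmid (hF.2.1 ⟨c, hc, rfl⟩)
    simp only [unitDisk2, Set.mem_setOf_eq] at ha hb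
    simp only [Pi.add_apply, Pi.smul_apply, smul_eq_mul]
    by_contra! hge
    apply hab
    have hs : (a 0 - b 0) ^ 2 + (a 1 - b 1) ^ 2 ≤ 0 := by nlinarith
    have h0 : a 0 = b 0 := by nlinarith [sq_nonneg (a 0 - b 0), sq_nonneg (a 1 - b 1)]
    have h1 : a 1 = b 1 := by nlinarith [sq_nonneg (a 0 - b 0), sq_nonneg (a 1 - b 1)]
    ext i; fin_cases i
    · exact h0
    · exact h1
  have hqW := hGA.2.1 hqG
  have hqu := (hu2 q hqW).1 hqF
  have hqv := (hv2 q hqW).1 hqG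
  have hmin : ∀ y ∈ JNR A, dotR (u + v) q ≤ dotR (u + v) y := fun y hy => by
    rw [dotR_add_left, dotR_add_left, hqu, hqv]; linarith [hu1 y hy, hv1 y hy]
  have huniq : ∀ y ∈ JNR A, dotR (u + v) y ≤ dotR (u + v) q → y = q := fun y hy h => by
    rw [dotR_add_left, dotR_add_left, hqu, hqv] at h
    have h1 := hu1 y hy
    have h2 := hv1 y hy
    have : y ∈ f '' unitDisk2 ∩ G :=
      ⟨(hu2 y hy).2 (by linarith), (hv2 y hy).2 (by linarith)⟩
    rw [hsing] at this; exact this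
  refine ⟨q, hsing, ⟨u + v, ?_⟩, ⟨u + v, ?_⟩⟩
  · ext x
    constructor
    · rintro rfl
      exact ⟨hqW, hmin⟩
    · rintro ⟨hx, h⟩
      exact huniq x hx (h q hqW)
  · ext x
    constructor
    · rintro rfl
      exact ⟨hqG, fun y hy => hmin y (hGA.2.1 hy)⟩
    · rintro ⟨hx, h⟩
      exact huniq x (hGA.2.1 hx) (h q hqG)
end
end

section
/- Let A₁,...,A_k be hermitian n×n complex matrices such that W = W(A₁,...,A_k) is not a singleton, and let p be a corner point of W. Then there exist a natural number s with 1 ≤ s < n and hermitian s×s complex matrices B₁,...,B_k such that W = conv( {p} ∪ W(B₁,...,B_k) ). -/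
open Matrix ComplexOrder

noncomputable section

open scoped MatrixOrder in
theorem aux_fac {n : ℕ} (H : Matrix (Fin n) (Fin n) ℂ) (hH : H.PosSemidef) :
    ∃ D : Matrix (Fin n) (Fin n) ℂ, H = Dᴴ * D :=
  CStarAlgebra.nonneg_iff_eq_star_mul_self.1 hH.nonneg

theorem aux_psd {n : ℕ} (H : Matrix (Fin n) (Fin n) ℂ) (hH : H.IsHermitian)
    (h : ∀ ρ, IsDensity ρ → 0 ≤ ((ρ * H).trace).re) : H.PosSemidef := by
  have key : ∀ M : Matrix (Fin n) (Fin n) ℂ, M.PosSemidef → 0 ≤ ((M * H).trace).re := by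
    intro M hM
    by_cases h0 : M.trace = 0
    · rw [hM.trace_eq_zero_iff.1 h0]; simp
    · have htr := hM.trace_nonneg
      obtain ⟨t, ht, hte⟩ : ∃ t : ℝ, 0 < t ∧ M.trace = (t : ℂ) := by
        rw [Complex.le_def] at htr
        refine ⟨M.trace.re, lt_of_le_of_ne (by simpa using htr.1) ?_, ?_⟩
        · intro hh; apply h0; apply Complex.ext
          · exact hh.symm
          · simpa using htr.2.symm
        · apply Complex.ext
          · simp
          · simpa using htr.2.symm
      have := h (((t⁻¹ : ℝ) : ℂ) • M) ⟨hM.smul (by exact_mod_cast (inv_pos.2 ht).le), by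
        rw [trace_smul, hte, smul_eq_mul, ← Complex.ofReal_mul, inv_mul_cancel₀ ht.ne']; simp⟩
      rw [Matrix.smul_mul, trace_smul, smul_eq_mul, Complex.re_ofReal_mul] at this
      exact nonneg_of_mul_nonneg_right this (inv_pos.2 ht)
  refine Matrix.PosSemidef.of_dotProduct_mulVec_nonneg hH fun x => ?_
  have h1 := key _ (posSemidef_vecMulVec_self_star x)
  have h2 : (vecMulVec x (star x) * H).trace = star x ⬝ᵥ H *ᵥ x := by
    rw [trace_mul_comm, mul_vecMulVec, trace_vecMulVec, dotProduct_comm]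
  rw [h2] at h1
  rw [Complex.le_def]
  exact ⟨by simpa using h1, by simpa using (hH.im_star_dotProduct_mulVec_self x).symm⟩

theorem aux_mul_zero {n : ℕ} (H ρ : Matrix (Fin n) (Fin n) ℂ) (hH : H.PosSemidef)
    (hρ : ρ.PosSemidef) (h : (ρ * H).trace = 0) : H * ρ = 0 := by
  obtain ⟨D, rfl⟩ := aux_fac _ hH
  obtain ⟨C, rfl⟩ := aux_fac _ hρ
  have : D * Cᴴ = 0 := by
    rw [← trace_conjTranspose_mul_self_eq_zero_iff, ← h]
    simp only [conjTranspose_mul, conjTranspose_conjTranspose]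
    rw [Matrix.mul_assoc Cᴴ, trace_mul_comm Cᴴ]
    simp only [Matrix.mul_assoc]
  calc Dᴴ * D * (Cᴴ * C) = Dᴴ * (D * Cᴴ) * C := by simp only [Matrix.mul_assoc]
    _ = 0 := by rw [this]; simp

theorem aux_im {n : ℕ} (H ρ : Matrix (Fin n) (Fin n) ℂ) (hH : H.IsHermitian)
    (hρ : ρ.IsHermitian) : ((ρ * H).trace).im = 0 := by
  have : star (ρ * H).trace = (ρ * H).trace := by
    rw [← trace_conjTranspose, conjTranspose_mul, hH.eq, hρ.eq, trace_mul_comm]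
  exact Complex.conj_eq_iff_im.1 this

theorem aux_shift {n k : ℕ} (A : Fin k → Matrix (Fin n) (Fin n) ℂ) (p u : Fin k → ℝ)
    (ρ : Matrix (Fin n) (Fin n) ℂ) (hρ : IsDensity ρ) :
    ((ρ * ∑ i, (u i : ℂ) • (A i - (p i : ℂ) • 1)).trace).re = dotR (wpt A ρ - p) u := by
  rw [Finset.mul_sum, trace_sum, Complex.re_sum, dotR]
  refine Finset.sum_congr rfl fun i _ => ?_
  rw [Matrix.mul_smul, trace_smul, smul_eq_mul, Complex.re_ofReal_mul, Matrix.mul_sub, trace_sub,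
    Matrix.mul_smul, trace_smul, Matrix.mul_one, hρ.2, Pi.sub_apply, wpt]
  simp [mul_comm]

theorem aux_eig {n k : ℕ} (A : Fin k → Matrix (Fin n) (Fin n) ℂ)
    (hA : ∀ i, (A i).IsHermitian)
    (p : Fin k → ℝ) (hp : IsCornerPoint (JNR A) p) :
    ∃ v : EuclideanSpace ℂ (Fin n), ‖v‖ = 1 ∧ ∀ i, A i *ᵥ v.ofLp = (p i : ℂ) • v.ofLp := by
  obtain ⟨⟨ρ, hρ, rfl⟩, hspan⟩ := hp
  set p := wpt A ρ with hpdef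
  have hρ' : IsDensity ρ := hρ
  let S : (Fin k → ℝ) → Matrix (Fin n) (Fin n) ℂ := fun u => ∑ i, (u i : ℂ) • (A i - (p i : ℂ) • 1)
  have hSh : ∀ u, (S u).IsHermitian := by
    intro u
    simp only [S, IsHermitian, conjTranspose_sum, conjTranspose_smul, conjTranspose_sub, (hA _).eq]
    simp
  have hcone : ∀ u ∈ normalConeAt (JNR A) p, S u * ρ = 0 := by
    intro u hu
    apply aux_mul_zero _ _ _ hρ'.1
    · apply Complex.ext
      · rw [aux_shift A p u ρ hρ', hpdef]; simp [dotR]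
      · exact aux_im _ _ (hSh u) hρ'.1.1
    · apply aux_psd _ (hSh u)
      intro σ hσ
      rw [aux_shift A p u σ hσ]
      exact hu _ ⟨σ, hσ, rfl⟩
  have hall : ∀ u, S u * ρ = 0 := by
    intro u
    have hu : u ∈ Submodule.span ℝ (normalConeAt (JNR A) p) := by rw [hspan]; trivial
    induction hu using Submodule.span_induction with
    | mem x h => exact hcone x h
    | zero => simp [S]
    | add x y _ _ hx hy =>
      have : S (x + y) = S x + S y := by
        simp [S, add_smul, Finset.sum_add_distrib]
      rw [this, Matrix.add_mul, hx, hy, add_zero]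
    | smul a x _ hx =>
      have : S (a • x) = (a : ℂ) • S x := by
        simp only [S, Finset.smul_sum, smul_smul]; simp
      rw [this, Matrix.smul_mul, hx, smul_zero]
  have hi : ∀ i, A i * ρ = (p i : ℂ) • ρ := by
    intro i
    have h1 := hall (Pi.single i 1)
    have h2 : S (Pi.single i 1) = A i - (p i : ℂ) • 1 := by
      simp only [S]
      rw [Finset.sum_eq_single i]
      · simp
      · intro j _ hj; simp [Pi.single_eq_of_ne hj]
      · simp
    rw [h2, Matrix.sub_mul, sub_eq_zero] at h1
    rw [h1, Matrix.smul_mul, Matrix.one_mul]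
  have hne : ρ ≠ 0 := by
    intro h; have := hρ'.2; rw [h] at this; simp at this
  obtain ⟨j, hj⟩ : ∃ j, ρ.col j ≠ 0 := by
    by_contra hc
    push Not at hc
    apply hne; ext a b; exact congrFun (hc b) a
  have hev : ∀ i, A i *ᵥ ρ.col j = (p i : ℂ) • ρ.col j := by
    intro i; ext a
    have := congrFun (congrFun (hi i) a) j
    simpa [Matrix.mul_apply, mulVec, dotProduct] using this
  let w : EuclideanSpace ℂ (Fin n) := WithLp.toLp 2 (ρ.col j)
  have hw : w ≠ 0 := by
    intro h; apply hj; exact congrArg WithLp.ofLp h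
  refine ⟨((‖w‖⁻¹ : ℝ) : ℂ) • w, ?_, ?_⟩
  · rw [norm_smul]; simp [hw]
  · intro i
    rw [WithLp.ofLp_smul, mulVec_smul, smul_comm, ← hev i]

theorem aux_basis {m : ℕ} (v : EuclideanSpace ℂ (Fin (m+1))) (hv : ‖v‖ = 1) :
    ∃ V : Matrix (Fin (m+1)) (Fin m) ℂ, Vᴴ * V = 1 ∧
      V * Vᴴ + vecMulVec v.ofLp (star v.ofLp) = 1 ∧ Vᴴ *ᵥ v.ofLp = 0 := by
  obtain ⟨b, hb⟩ := Orthonormal.exists_orthonormalBasis_extension_of_card_eq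
    (𝕜 := ℂ) (ι := Fin (m+1)) (E := EuclideanSpace ℂ (Fin (m+1))) (by simp)
    (v := fun _ => v) (s := {0}) (by
      constructor
      · rintro ⟨i, hi⟩; simpa using hv
      · rintro ⟨i, hi⟩ ⟨j, hj⟩ hij
        exact absurd (Subtype.ext ((Set.mem_singleton_iff.1 hi).trans (Set.mem_singleton_iff.1 hj).symm)) hij)
  have hb0 : b 0 = v := hb 0 rfl
  let U : Matrix (Fin (m+1)) (Fin (m+1)) ℂ := of fun i j => b j i
  have hU : Uᴴ * U = 1 := by
    ext i j
    have := orthonormal_iff_ite.1 b.orthonormal i j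
    rw [Matrix.one_apply, ← this]
    simp [U, Matrix.mul_apply, PiLp.inner_apply, mul_comm]
  have hU' : U * Uᴴ = 1 := mul_eq_one_comm.1 hU
  refine ⟨of fun i j => b j.succ i, ?_, ?_, ?_⟩
  · ext i j
    have := congrFun (congrFun hU i.succ) j.succ
    simpa [U, Matrix.mul_apply, Matrix.one_apply] using this
  · ext i j
    have := congrFun (congrFun hU' i) j
    rw [← this, ← hb0]
    simp [U, Matrix.mul_apply, Fin.sum_univ_succ, vecMulVec_apply, add_comm]
  · ext i
    have := congrFun (congrFun hU i.succ) 0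
    rw [← hb0]
    simpa [U, Matrix.mul_apply, mulVec, dotProduct, Matrix.one_apply] using this

theorem aux_convex {n k : ℕ} (A : Fin k → Matrix (Fin n) (Fin n) ℂ) : Convex ℝ (JNR A) := by
  rintro _ ⟨ρ, hρ, rfl⟩ _ ⟨σ, hσ, rfl⟩ a b ha hb hab
  refine ⟨(a : ℂ) • ρ + (b : ℂ) • σ, ⟨(hρ.1.smul (by exact_mod_cast ha)).add
    (hσ.1.smul (by exact_mod_cast hb)), ?_⟩, ?_⟩
  · rw [trace_add, trace_smul, trace_smul, hρ.2, hσ.2]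
    simp only [smul_eq_mul, mul_one]; exact_mod_cast hab
  · ext i
    simp [wpt, Matrix.add_mul]

theorem stmt12 {n k : ℕ} (A : Fin k → Matrix (Fin n) (Fin n) ℂ)
    (hA : ∀ i, (A i).IsHermitian)
    (hns : ¬ ∃ x, JNR A = {x})
    (p : Fin k → ℝ) (hp : IsCornerPoint (JNR A) p) :
    ∃ s : ℕ, 1 ≤ s ∧ s < n ∧
      ∃ B : Fin k → Matrix (Fin s) (Fin s) ℂ, (∀ i, (B i).IsHermitian) ∧
        JNR A = convexHull ℝ ({p} ∪ JNR B) := by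
  obtain ⟨v, hv, hev⟩ := aux_eig A hA p hp
  cases n with
  | zero => 
    obtain ⟨⟨ρ, hρ, _⟩, _⟩ := hp
    have h2 := hρ.2
    simp [Matrix.trace] at h2
  | succ m =>
  have hm : 1 ≤ m := by
    by_contra hm
    obtain rfl : m = 0 := by omega
    apply hns
    refine ⟨p, Set.Subset.antisymm ?_ (Set.singleton_subset_iff.2 hp.1)⟩
    obtain ⟨⟨ρ, hρ, rfl⟩, _⟩ := hp
    rintro _ ⟨σ, hσ, rfl⟩
    have : σ = ρ := by
      have h1 := hσ.2
      have h2 := hρ.2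
      simp only [Matrix.trace, Fin.sum_univ_succ, diag_apply] at h1 h2
      ext i j
      fin_cases i; fin_cases j
      simp at h1 h2
      simp [h1, h2]
    rw [this]; rfl
  obtain ⟨V, hV1, hV2, hV3⟩ := aux_basis v hv
  set x := v.ofLp
  have hx3 : star x ᵥ* V = 0 := by
    have := congrArg star hV3
    rwa [star_mulVec, conjTranspose_conjTranspose, star_zero] at this
  have hdec : ∀ i, A i = (p i : ℂ) • vecMulVec x (star x) + V * (Vᴴ * A i * V) * Vᴴ := by
    intro i
    have e1 : A i * vecMulVec x (star x) = (p i : ℂ) • vecMulVec x (star x) := by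
      rw [mul_vecMulVec, hev, smul_vecMulVec]
    have e2 : vecMulVec x (star x) * A i = (p i : ℂ) • vecMulVec x (star x) := by
      have := congrArg conjTranspose e1
      rw [conjTranspose_mul, (hA i).eq, conjTranspose_smul, conjTranspose_vecMulVec, star_star] at this
      simpa using this
    have e3 : V * Vᴴ = 1 - vecMulVec x (star x) := eq_sub_of_add_eq hV2
    have e4 : vecMulVec x (star x) * V = 0 := by
      rw [vecMulVec_mul, hx3]; ext; simp [vecMulVec_apply]
    have e5 : V * (Vᴴ * A i * V) * Vᴴ = (V * Vᴴ) * (A i * (V * Vᴴ)) := by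
      simp only [Matrix.mul_assoc]
    have e6 : vecMulVec x (star x) * (V * Vᴴ) = 0 := by
      rw [← Matrix.mul_assoc, e4, Matrix.zero_mul]
    rw [e5]
    conv_rhs => rw [e3, Matrix.sub_mul, ← e3, ← Matrix.mul_assoc (vecMulVec x (star x)), e2, Matrix.smul_mul, e6, e3, Matrix.mul_sub, e1]
    simp
  refine ⟨m, hm, by omega, fun i => Vᴴ * A i * V, fun i => isHermitian_conjTranspose_mul_mul V (hA i), ?_⟩
  apply Set.Subset.antisymm
  · rintro _ ⟨ρ, hρ, rfl⟩
    have hQ : (Vᴴ * ρ * V).PosSemidef := hρ.1.conjTranspose_mul_mul_same V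
    have ht0 := hρ.1.dotProduct_mulVec_nonneg x
    obtain ⟨t, ht, hte⟩ : ∃ t : ℝ, 0 ≤ t ∧ star x ⬝ᵥ ρ *ᵥ x = (t : ℂ) := by
      rw [Complex.le_def] at ht0
      refine ⟨_, by simpa using ht0.1, Complex.ext (by rfl) (by simpa using ht0.2.symm)⟩
    have htv : (ρ * vecMulVec x (star x)).trace = t := by
      rw [mul_vecMulVec, trace_vecMulVec, dotProduct_comm, hte]
    have hQt : (Vᴴ * ρ * V).trace = ((1 - t : ℝ) : ℂ) := by
      rw [Matrix.mul_assoc, trace_mul_comm, Matrix.mul_assoc, eq_sub_of_add_eq hV2, Matrix.mul_sub, trace_sub, htv, Matrix.mul_one, hρ.2]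
      simp
    have hw : ∀ i, wpt A ρ i = t * p i + ((Vᴴ * ρ * V * (Vᴴ * A i * V)).trace).re := by
      intro i
      have : (ρ * A i).trace = t * p i + (Vᴴ * ρ * V * (Vᴴ * A i * V)).trace := by
        conv_lhs => rw [hdec i]
        rw [Matrix.mul_add, trace_add, Matrix.mul_smul, trace_smul, htv, smul_eq_mul, mul_comm (t : ℂ)]
        congr 1
        rw [← Matrix.mul_assoc, trace_mul_comm]
        simp only [Matrix.mul_assoc]
      rw [wpt, this]; simp
    have hQn := hQ.trace_nonneg
    rw [hQt] at hQn
    have ht1 : 0 ≤ 1 - t := by exact_mod_cast hQn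
    rcases ht1.eq_or_lt with h | h
    · have hQ0 : Vᴴ * ρ * V = 0 := hQ.trace_eq_zero_iff.1 (by rw [hQt, ← h]; simp)
      have : wpt A ρ = p := by
        ext i; rw [hw, hQ0]; simp; rw [show t = 1 by linarith, one_mul]
      rw [this]
      exact subset_convexHull ℝ _ (Or.inl rfl)
    · set σ := (((1 - t)⁻¹ : ℝ) : ℂ) • (Vᴴ * ρ * V) with hσ
      have hσd : IsDensity σ := ⟨hQ.smul (by exact_mod_cast (inv_pos.2 h).le), by
        rw [hσ, trace_smul, hQt, smul_eq_mul, ← Complex.ofReal_mul, inv_mul_cancel₀ h.ne']; simp⟩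
      have : wpt A ρ = t • p + (1 - t) • wpt (fun i => Vᴴ * A i * V) σ := by
        ext i
        rw [hw]
        simp only [Pi.add_apply, Pi.smul_apply, smul_eq_mul, wpt, hσ]
        rw [Matrix.smul_mul, trace_smul, smul_eq_mul, Complex.re_ofReal_mul, ← mul_assoc, mul_inv_cancel₀ h.ne', one_mul]
      rw [this]
      exact convex_convexHull ℝ ({p} ∪ JNR (fun i => Vᴴ * A i * V)) (subset_convexHull ℝ _ (Or.inl rfl))
        (subset_convexHull ℝ _ (Or.inr ⟨σ, hσd, rfl⟩)) ht ht1 (by ring)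
  · apply convexHull_min _ (aux_convex A)
    rintro _ (rfl | ⟨σ, hσ, rfl⟩)
    · exact hp.1
    · refine ⟨V * σ * Vᴴ, ⟨hσ.1.mul_mul_conjTranspose_same V, ?_⟩, ?_⟩
      · rw [trace_mul_comm, ← Matrix.mul_assoc, hV1, Matrix.one_mul, hσ.2]
      · ext i
        simp only [wpt]
        congr 1
        rw [Matrix.mul_assoc, Matrix.mul_assoc, trace_mul_comm]
        simp only [Matrix.mul_assoc]
end
end

section
/- Let Y₁ and Y₂ be convex subsets of a real vector space and let F be a face of the convex hull conv(Y₁ ∪ Y₂). Then F ∩ Y₁ is a face of Y₁, F ∩ Y₂ is a face of Y₂, and F = conv( (F ∩ Y₁) ∪ (F ∩ Y₂) ). -/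
open Matrix ComplexOrder

noncomputable section

/-- faces of the convex hull of a union of two convex sets. -/
theorem stmt13 {E : Type*} [AddCommGroup E] [Module ℝ E]
    (Y₁ Y₂ : Set E) (hY₁ : Convex ℝ Y₁) (hY₂ : Convex ℝ Y₂)
    (F : Set E) (hF : IsFaceOf (convexHull ℝ (Y₁ ∪ Y₂)) F) :
    IsFaceOf Y₁ (F ∩ Y₁) ∧ IsFaceOf Y₂ (F ∩ Y₂) ∧
      F = convexHull ℝ ((F ∩ Y₁) ∪ (F ∩ Y₂)) := by
  obtain ⟨hc, he⟩ := hF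
  have key : ∀ Y : Set E, Convex ℝ Y → Y ⊆ convexHull ℝ (Y₁ ∪ Y₂) → IsFaceOf Y (F ∩ Y) := by
    intro Y hY hsub
    refine ⟨hc.inter hY, Set.inter_subset_right, ?_⟩
    intro x hx y hy z hz hzo
    exact ⟨he.2 (hsub hx) (hsub hy) hz.1 hzo, hx⟩
  have h1 : Y₁ ⊆ convexHull ℝ (Y₁ ∪ Y₂) :=
    Set.subset_union_left.trans (subset_convexHull ℝ _)
  have h2 : Y₂ ⊆ convexHull ℝ (Y₁ ∪ Y₂) :=
    Set.subset_union_right.trans (subset_convexHull ℝ _)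
  refine ⟨key Y₁ hY₁ h1, key Y₂ hY₂ h2, Set.Subset.antisymm ?_ ?_⟩
  · intro x hx
    have hx' := he.1 hx
    have triv : x ∈ Y₁ ∪ Y₂ → x ∈ convexHull ℝ ((F ∩ Y₁) ∪ (F ∩ Y₂)) := by
      rintro (h | h)
      · exact subset_convexHull ℝ _ (Or.inl ⟨hx, h⟩)
      · exact subset_convexHull ℝ _ (Or.inr ⟨hx, h⟩)
    rcases Y₁.eq_empty_or_nonempty with h₁ | h₁
    · rw [h₁, Set.empty_union, hY₂.convexHull_eq] at hx'
      exact triv (Or.inr hx')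
    rcases Y₂.eq_empty_or_nonempty with h₂ | h₂
    · rw [h₂, Set.union_empty, hY₁.convexHull_eq] at hx'
      exact triv (Or.inl hx')
    rw [hY₁.convexHull_union hY₂ h₁ h₂, mem_convexJoin] at hx'
    obtain ⟨a, ha, b, hb, hab⟩ := hx'
    rw [← insert_endpoints_openSegment] at hab
    rcases hab with rfl | rfl | hab
    · exact triv (Or.inl ha)
    · exact triv (Or.inr hb)
    · have haF := he.2 (h1 ha) (h2 hb) hx hab
      have hbF := he.2 (h2 hb) (h1 ha) hx (by rwa [openSegment_symm])
      have haC : a ∈ convexHull ℝ ((F ∩ Y₁) ∪ (F ∩ Y₂)) :=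
        subset_convexHull ℝ _ (Or.inl ⟨haF, ha⟩)
      have hbC : b ∈ convexHull ℝ ((F ∩ Y₁) ∪ (F ∩ Y₂)) :=
        subset_convexHull ℝ _ (Or.inr ⟨hbF, hb⟩)
      exact (convex_convexHull ℝ _).openSegment_subset haC hbC hab
  · exact convexHull_min (Set.union_subset Set.inter_subset_left Set.inter_subset_left) hc
end
end

section
/- Let A₁ and A₂ be hermitian n×n complex matrices. Then W(A₁,A₂) = { (⟨φ, A₁φ⟩, ⟨φ, A₂φ⟩) : φ ∈ ℂⁿ, ‖φ‖ = 1 }; that is, the joint numerical range of two hermitian matrices, defined via density matrices, coincides with the set of pairs of expectation values at unit vectors. -/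
open Matrix ComplexOrder

noncomputable section

theorem th_key {n : ℕ} (D : Matrix (Fin n) (Fin n) ℂ) (φ ψ : Fin n → ℂ) (a b : ℝ) (d : ℂ)
    (hd : d ≠ 0) (ha : 0 < a) (hb : 0 < b)
    (h1 : star φ ⬝ᵥ (D *ᵥ φ) = -(b : ℂ) * d) (h2 : star ψ ⬝ᵥ (D *ᵥ ψ) = (a : ℂ) * d) :
    ∃ χ : Fin n → ℂ, χ ≠ 0 ∧ star χ ⬝ᵥ (D *ᵥ χ) = 0 := by
  set u := (star φ ⬝ᵥ (D *ᵥ ψ)) / d with hu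
  set v := (star ψ ⬝ᵥ (D *ᵥ φ)) / d with hv
  have hu' : star φ ⬝ᵥ (D *ᵥ ψ) = u * d := by rw [hu]; field_simp
  have hv' : star ψ ⬝ᵥ (D *ᵥ φ) = v * d := by rw [hv]; field_simp
  obtain ⟨z, hz, c, hc⟩ : ∃ z : ℂ, star z * z = 1 ∧ ∃ c : ℝ, z * u + star z * v = (c : ℂ) := by
    obtain ⟨z, hz, hw⟩ : ∃ z : ℂ, star z * z = 1 ∧ (z * (u - star v)).im = 0 := by
      by_cases hw : u - star v = 0
      · exact ⟨1, by simp, by rw [hw]; simp⟩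
      · have hn : ((‖u - star v‖ : ℝ) : ℂ) ≠ 0 := by
          simpa using hw
        have hm := Complex.conj_mul' (u - star v)
        refine ⟨star (u - star v) / (‖u - star v‖ : ℝ), ?_, ?_⟩
        · generalize u - star v = w at *
          simp only [star_div₀, star_star, RCLike.star_def, Complex.conj_ofReal] at *
          rw [Complex.conj_conj, div_mul_div_comm, mul_comm w, hm]
          field_simp
        · generalize u - star v = w at *
          simp only [RCLike.star_def] at *
          rw [div_mul_eq_mul_div, hm, sq, mul_div_assoc, div_self hn]
          simp
    refine ⟨z, hz, (z * u + star z * v).re, ?_⟩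
    apply Complex.ext
    · simp
    · simp at hw ⊢
      linarith
  have hdisc : 0 ≤ c ^ 2 + 4 * a * b := by positivity
  obtain ⟨r, hr⟩ : ∃ r : ℝ, -b + r * c + r ^ 2 * a = 0 := by
    refine ⟨(-c + Real.sqrt (c ^ 2 + 4 * a * b)) / (2 * a), ?_⟩
    have := Real.sq_sqrt hdisc
    generalize Real.sqrt (c ^ 2 + 4 * a * b) = s at *
    field_simp
    linarith
  have hrC : -(b : ℂ) + r * c + r ^ 2 * a = 0 := by exact_mod_cast hr
  refine ⟨φ + ((r : ℂ) * z) • ψ, ?_, ?_⟩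
  · intro h0
    have hφ : φ = (-((r : ℂ) * z)) • ψ := by
      rw [neg_smul]; exact eq_neg_of_add_eq_zero_left h0
    rw [hφ] at h1
    simp only [star_smul, mulVec_smul, smul_dotProduct, dotProduct_smul, smul_eq_mul, h2] at h1
    simp only [star_neg, star_mul', RCLike.star_def, Complex.conj_ofReal] at h1 hz
    have h3 : ((r ^ 2 * a + b : ℝ) : ℂ) * d = 0 := by
      push_cast
      linear_combination h1 - (r : ℂ) ^ 2 * a * d * hz
    rcases mul_eq_zero.1 h3 with h | h
    · have : r ^ 2 * a + b = 0 := by exact_mod_cast h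
      nlinarith [mul_nonneg (sq_nonneg r) ha.le]
    · exact hd h
  · simp only [star_add, star_smul, mulVec_add, mulVec_smul, add_dotProduct, dotProduct_add,
      smul_dotProduct, dotProduct_smul, smul_eq_mul, h1, h2, hu', hv']
    simp only [star_mul', RCLike.star_def, Complex.conj_ofReal] at hc hz ⊢
    linear_combination d * hrC + r * d * hc + (r : ℂ) ^ 2 * a * d * hz

theorem th_real {n : ℕ} (A : Matrix (Fin n) (Fin n) ℂ) (hA : A.IsHermitian) (φ : Fin n → ℂ) :
    star φ ⬝ᵥ (A *ᵥ φ) = ((star φ ⬝ᵥ (A *ᵥ φ)).re : ℂ) := by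
  have h : star (star φ ⬝ᵥ (A *ᵥ φ)) = star φ ⬝ᵥ (A *ᵥ φ) := by
    rw [← star_dotProduct, star_mulVec, hA.eq, ← dotProduct_mulVec]
  exact (Complex.conj_eq_iff_re.1 h).symm

theorem th_convex {n : ℕ} (A : Fin 2 → Matrix (Fin n) (Fin n) ℂ)
    (hA : ∀ i, (A i).IsHermitian) :
    Convex ℝ {x : Fin 2 → ℝ | ∃ φ : Fin n → ℂ, star φ ⬝ᵥ φ = 1 ∧
      ∀ i, star φ ⬝ᵥ ((A i) *ᵥ φ) = (x i : ℂ)} := by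
  rw [convex_iff_pairwise_pos]
  rintro x ⟨φ, hφ, hx⟩ y ⟨ψ, hψ, hy⟩ hxy a b ha hb hab
  set c : ℂ := ((a * x 0 + b * y 0 : ℝ) : ℂ) + Complex.I * ((a * x 1 + b * y 1 : ℝ) : ℂ) with hc
  have hq : ∀ χ : Fin n → ℂ, star χ ⬝ᵥ ((A 0 + Complex.I • A 1 - c • 1) *ᵥ χ) =
      star χ ⬝ᵥ (A 0 *ᵥ χ) + Complex.I * (star χ ⬝ᵥ (A 1 *ᵥ χ)) - c * (star χ ⬝ᵥ χ) := by
    intro χ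
    simp [sub_mulVec, add_mulVec, smul_mulVec, dotProduct_add, dotProduct_sub]
  have habC : (a : ℂ) + b = 1 := by exact_mod_cast hab
  obtain ⟨χ, hχ0, hχ⟩ := th_key (A 0 + Complex.I • A 1 - c • 1) φ ψ a b
    (((y 0 - x 0 : ℝ) : ℂ) + Complex.I * ((y 1 - x 1 : ℝ) : ℂ)) (by
      intro h
      apply hxy
      have h0 := congrArg Complex.re h
      have h1 := congrArg Complex.im h
      simp at h0 h1
      ext i
      fin_cases i
      · simp; linarith
      · simp; linarith) ha hb
    (by
      rw [hq, hφ, hx, hx, hc]; push_cast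
      linear_combination -(x 0 + Complex.I * x 1) * habC)
    (by
      rw [hq, hψ, hy, hy, hc]; push_cast
      linear_combination -(y 0 + Complex.I * y 1) * habC)
  rw [hq] at hχ
  have hpos : 0 < star χ ⬝ᵥ χ := dotProduct_star_self_pos_iff.2 hχ0
  have hN := Complex.eq_re_of_ofReal_le hpos.le
  set N := (star χ ⬝ᵥ χ).re with hNdef
  have hNpos : 0 < N := by rw [hN] at hpos; exact_mod_cast hpos
  rw [hN, th_real _ (hA 0), th_real _ (hA 1), hc] at hχ
  have h0 := congrArg Complex.re hχ
  have h1 := congrArg Complex.im hχ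
  simp at h0 h1
  have hs : ((Real.sqrt N : ℝ) : ℂ)⁻¹ * ((Real.sqrt N : ℝ) : ℂ)⁻¹ * N = 1 := by
    have h2 : (Real.sqrt N)⁻¹ * (Real.sqrt N)⁻¹ * N = 1 := by
      have := Real.mul_self_sqrt hNpos.le
      rw [← mul_inv, this, inv_mul_cancel₀ hNpos.ne']
    exact_mod_cast h2
  refine ⟨((Real.sqrt N : ℝ) : ℂ)⁻¹ • χ, ?_, ?_⟩
  · simp only [star_smul, smul_dotProduct, dotProduct_smul, smul_eq_mul, hN, star_inv₀,
      RCLike.star_def, Complex.conj_ofReal]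
    rw [← mul_assoc]; exact hs
  · have key : ∀ i, (star χ ⬝ᵥ (A i *ᵥ χ)).re = (a * x i + b * y i) * N := by
      intro i
      fin_cases i
      · simp; linarith
      · simp; linarith
    intro i
    simp only [star_smul, mulVec_smul, smul_dotProduct, dotProduct_smul, smul_eq_mul, star_inv₀,
      RCLike.star_def, Complex.conj_ofReal]
    rw [th_real _ (hA i), key]
    simp only [Pi.add_apply, Pi.smul_apply, smul_eq_mul]
    push_cast
    linear_combination (a * x i + b * y i : ℂ) * hs

/-- the joint numerical range of two hermitian matrices equals
the set of pairs of expectation values at unit vectors. -/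
theorem stmt14 {n : ℕ} (A : Fin 2 → Matrix (Fin n) (Fin n) ℂ)
    (hA : ∀ i, (A i).IsHermitian) :
    JNR A = {x : Fin 2 → ℝ | ∃ φ : Fin n → ℂ, star φ ⬝ᵥ φ = 1 ∧
      ∀ i, star φ ⬝ᵥ ((A i) *ᵥ φ) = (x i : ℂ)} := by
  apply Set.Subset.antisymm
  · rintro _ ⟨ρ, ⟨hρ, htr⟩, rfl⟩
    have hsp : ∀ M : Matrix (Fin n) (Fin n) ℂ, (ρ * M).trace = ∑ k, (hρ.1.eigenvalues k : ℂ) *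
        (star (fun j => (hρ.1.eigenvectorUnitary : Matrix (Fin n) (Fin n) ℂ) j k) ⬝ᵥ
          (M *ᵥ (fun j => (hρ.1.eigenvectorUnitary : Matrix (Fin n) (Fin n) ℂ) j k))) := by
      intro M
      conv_lhs => rw [hρ.1.spectral_theorem, Unitary.conjStarAlgAut_apply]
      generalize (hρ.1.eigenvectorUnitary : Matrix (Fin n) (Fin n) ℂ) = U
      rw [Matrix.mul_assoc, Matrix.mul_assoc, Matrix.trace_mul_comm, Matrix.mul_assoc, Matrix.trace]
      refine Finset.sum_congr rfl fun k _ => ?_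
      rw [Matrix.diag_apply, Matrix.diagonal_mul, Matrix.mul_assoc]
      rfl
    have hone : ∀ k, star (fun j => (hρ.1.eigenvectorUnitary : Matrix (Fin n) (Fin n) ℂ) j k) ⬝ᵥ
        (fun j => (hρ.1.eigenvectorUnitary : Matrix (Fin n) (Fin n) ℂ) j k) = 1 := by
      intro k
      have h := congrFun (congrFun (Unitary.coe_star_mul_self hρ.1.eigenvectorUnitary) k) k
      rw [Matrix.one_apply_eq] at h
      exact h
    have hsum : ∑ k, hρ.1.eigenvalues k = 1 := by
      have h := hsp 1
      simp only [Matrix.mul_one, htr, Matrix.one_mulVec, hone, mul_one] at h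
      exact_mod_cast h.symm
    have hmem := (th_convex A hA).sum_mem (t := Finset.univ) (w := hρ.1.eigenvalues)
      (z := fun k i => (star (fun j => (hρ.1.eigenvectorUnitary : Matrix (Fin n) (Fin n) ℂ) j k) ⬝ᵥ
          (A i *ᵥ (fun j => (hρ.1.eigenvectorUnitary : Matrix (Fin n) (Fin n) ℂ) j k))).re)
      (fun k _ => hρ.eigenvalues_nonneg k) hsum
      (fun k _ => ⟨_, hone k, fun i => th_real _ (hA i) _⟩)
    convert hmem using 1
    ext i
    simp only [wpt, hsp, Complex.re_sum, Complex.re_ofReal_mul, Finset.sum_apply, Pi.smul_apply,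
      smul_eq_mul]
  · rintro x ⟨φ, hφ, hx⟩
    refine ⟨vecMulVec φ (star φ), ⟨posSemidef_vecMulVec_self_star φ, ?_⟩, ?_⟩
    · rw [trace_vecMulVec, dotProduct_comm, hφ]
    · ext i
      rw [wpt, vecMulVec_mul, trace_vecMulVec, dotProduct_comm, ← dotProduct_mulVec, hx]
      simp
end
end

section
/- Let A₁,...,A_k be hermitian n×n complex matrices with n ≥ 2, and let p = (p₁,...,p_k) ∈ ℝ^k be a corner point of W = W(A₁,...,A_k). Then there exist a unitary matrix U ∈ M_n(ℂ) and hermitian (n−1)×(n−1) matrices B₁,...,B_k such that for each i, U Aᵢ U* is block diagonal with a 1×1 block equal to pᵢ and an (n−1)×(n−1) block equal to Bᵢ. In particular, there exists a nonzero vector φ ∈ ℂⁿ with Aᵢφ = pᵢφ for all i = 1,...,k (p lies in the joint spectrum). -/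
open Matrix ComplexOrder

noncomputable section

def HH {n k : ℕ} (A : Fin k → Matrix (Fin n) (Fin n) ℂ) (p u : Fin k → ℝ) :
    Matrix (Fin n) (Fin n) ℂ := ∑ i, (u i : ℂ) • (A i - (p i : ℂ) • 1)

lemma HH_herm {n k : ℕ} (A : Fin k → Matrix (Fin n) (Fin n) ℂ) (hA : ∀ i, (A i).IsHermitian)
    (p u : Fin k → ℝ) : (HH A p u).IsHermitian := by
  unfold HH Matrix.IsHermitian
  simp [Matrix.conjTranspose_sum, (hA _).eq]

lemma dot_eq {n k : ℕ} (A : Fin k → Matrix (Fin n) (Fin n) ℂ) (p u : Fin k → ℝ)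
    (σ : Matrix (Fin n) (Fin n) ℂ) (hσ : σ.trace = 1) :
    dotR (wpt A σ - p) u = ((σ * HH A p u).trace).re := by
  simp only [dotR, wpt, HH, Finset.mul_sum, Matrix.trace_sum, Complex.re_sum, Pi.sub_apply]
  refine Finset.sum_congr rfl fun i _ => ?_
  simp [mul_sub, Matrix.trace_sub, Matrix.trace_smul, hσ]
  ring

lemma tr_vec {n : ℕ} (H : Matrix (Fin n) (Fin n) ℂ) (x : Fin n → ℂ) :
    (vecMulVec x (star x) * H).trace = star x ⬝ᵥ H *ᵥ x := by
  rw [Matrix.trace_mul_comm, mul_vecMulVec, trace_vecMulVec, dotProduct_comm]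

lemma herm_im {n : ℕ} (H : Matrix (Fin n) (Fin n) ℂ) (hH : H.IsHermitian) (x : Fin n → ℂ) :
    (star x ⬝ᵥ H *ᵥ x).im = 0 := by
  exact hH.im_star_dotProduct_mulVec_self x

lemma HH_psd {n k : ℕ} (A : Fin k → Matrix (Fin n) (Fin n) ℂ) (hA : ∀ i, (A i).IsHermitian)
    (p u : Fin k → ℝ) (hu : u ∈ normalConeAt (JNR A) p) : (HH A p u).PosSemidef := by
  refine PosSemidef.of_dotProduct_mulVec_nonneg (HH_herm A hA p u) fun x => ?_
  have him := herm_im _ (HH_herm A hA p u) x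
  by_cases hx : x = 0
  · simp [hx]
  have hpos : 0 < star x ⬝ᵥ x := Matrix.dotProduct_star_self_pos_iff.mpr hx
  obtain ⟨r, hr⟩ : ∃ r : ℝ, star x ⬝ᵥ x = (r : ℂ) :=
    ⟨(star x ⬝ᵥ x).re, by
      apply Complex.ext <;> simp [← (Complex.lt_def.mp hpos).2]⟩
  rw [hr] at hpos
  have hr0 : 0 < r := by exact_mod_cast hpos
  have hd : IsDensity (((r⁻¹ : ℝ) : ℂ) • vecMulVec x (star x)) := by
    refine ⟨(posSemidef_vecMulVec_self_star x).smul ?_, ?_⟩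
    · exact_mod_cast (inv_pos.mpr hr0).le
    · rw [Matrix.trace_smul, trace_vecMulVec, dotProduct_comm, hr]
      have : (r : ℂ) ≠ 0 := by exact_mod_cast hr0.ne'
      simp [this]
  have h := hu _ ⟨_, hd, rfl⟩
  rw [dot_eq A p u _ hd.2, Matrix.smul_mul, Matrix.trace_smul, tr_vec, smul_eq_mul,
    Complex.re_ofReal_mul] at h
  have h2 := nonneg_of_mul_nonneg_right h (inv_pos.mpr hr0)
  rw [Complex.le_def]
  exact ⟨by simpa using h2, by simpa using him.symm⟩

open scoped MatrixOrder in
lemma exists_sq {n : ℕ} (H : Matrix (Fin n) (Fin n) ℂ) (h : H.PosSemidef) :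
    ∃ C : Matrix (Fin n) (Fin n) ℂ, H = Cᴴ * C := by
  exact CStarAlgebra.nonneg_iff_eq_star_mul_self.mp h.nonneg

lemma mul_zero_of_trace {n : ℕ} (H ρ : Matrix (Fin n) (Fin n) ℂ) (h : H.PosSemidef)
    (hρ : ρ.PosSemidef) (ht : ((ρ * H).trace).re = 0) : H * ρ = 0 := by
  obtain ⟨C, rfl⟩ := exists_sq ρ hρ
  obtain ⟨D, rfl⟩ := exists_sq H h
  have e : (Cᴴ * C * (Dᴴ * D)).trace = ((D * Cᴴ)ᴴ * (D * Cᴴ)).trace := by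
    rw [Matrix.mul_assoc, Matrix.trace_mul_comm]
    simp [Matrix.mul_assoc]
  rw [e] at ht
  have hp := posSemidef_conjTranspose_mul_self (D * Cᴴ)
  have h0 : ((D * Cᴴ)ᴴ * (D * Cᴴ)).trace = 0 := by
    apply Complex.ext
    · simpa using ht
    · simpa using (Complex.le_def.mp hp.trace_nonneg).2.symm
  rw [hp.trace_eq_zero_iff, conjTranspose_mul_self_eq_zero] at h0
  rw [show Dᴴ * D * (Cᴴ * C) = Dᴴ * (D * Cᴴ) * C by simp only [Matrix.mul_assoc], h0]
  simp

lemma exists_eig {n k : ℕ} (A : Fin k → Matrix (Fin n) (Fin n) ℂ)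
    (hA : ∀ i, (A i).IsHermitian)
    (p : Fin k → ℝ) (hp : IsCornerPoint (JNR A) p) :
    ∃ φ : Fin n → ℂ, φ ≠ 0 ∧ ∀ i, (A i) *ᵥ φ = (p i : ℂ) • φ := by
  obtain ⟨⟨ρ, hρ, hρp⟩, hspan⟩ := hp
  have key : ∀ u : Fin k → ℝ, HH A p u * ρ = 0 := by
    intro u
    have hu : u ∈ Submodule.span ℝ (normalConeAt (JNR A) p) := by rw [hspan]; trivial
    induction hu using Submodule.span_induction with
    | mem u hu =>
      refine mul_zero_of_trace _ _ (HH_psd A hA p u hu) hρ.1 ?_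
      rw [← dot_eq A p u ρ hρ.2, hρp]
      simp [dotR]
    | zero => simp [HH]
    | add u v _ _ h1 h2 =>
      have : HH A p (u + v) = HH A p u + HH A p v := by
        simp [HH, add_smul, Finset.sum_add_distrib]
      rw [this, Matrix.add_mul, h1, h2, add_zero]
    | smul a u _ h1 =>
      have : HH A p (a • u) = (a : ℂ) • HH A p u := by
        simp only [HH, Finset.smul_sum, smul_smul, Pi.smul_apply, smul_eq_mul, Complex.ofReal_mul]
      rw [this, Matrix.smul_mul, h1, smul_zero]
  have key2 : ∀ i, A i * ρ = (p i : ℂ) • ρ := by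
    intro i
    have := key (Pi.single i 1)
    have e : HH A p (Pi.single i 1) = A i - (p i : ℂ) • 1 := by
      unfold HH
      rw [Finset.sum_eq_single i]
      · simp
      · intro j _ hj; simp [hj]
      · simp
    rw [e, Matrix.sub_mul, sub_eq_zero] at this
    simpa using this
  have hne : ρ ≠ 0 := by
    rintro rfl
    simpa using hρ.2
  obtain ⟨j, hj⟩ : ∃ j, ρ.col j ≠ 0 := by
    by_contra! h
    exact hne (by ext a b; exact congrFun (h b) a)
  refine ⟨ρ.col j, hj, fun i => ?_⟩
  ext a
  exact congrFun (congrFun (key2 i) a) j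

lemma exists_U {n : ℕ} (i0 : Fin n) (φ : Fin n → ℂ) (hφ : φ ≠ 0) :
    ∃ U : Matrix (Fin n) (Fin n) ℂ, Uᴴ * U = 1 ∧ U * Uᴴ = 1 ∧
      ∃ c : ℂ, Uᴴ.col i0 = c • φ := by
  let x : EuclideanSpace ℂ (Fin n) := WithLp.toLp 2 φ
  have hx : x ≠ 0 := by
    intro h; apply hφ; simpa [x] using h
  let v : Fin n → EuclideanSpace ℂ (Fin n) := fun _ => ((‖x‖⁻¹ : ℝ) : ℂ) • x
  have hv : Orthonormal ℂ (({i0} : Set (Fin n)).domRestrict v) := by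
    constructor
    · intro i
      have : ‖x‖ ≠ 0 := by simpa using hx
      simp [v, norm_smul, this]
    · intro i j hij
      exact absurd (Subsingleton.elim i j) hij
  obtain ⟨b, hb⟩ := hv.exists_orthonormalBasis_extension_of_card_eq (by simp)
  have hb0 := hb i0 rfl
  let U : Matrix (Fin n) (Fin n) ℂ := Matrix.of fun i j => star (b i j)
  have h1 : U * Uᴴ = 1 := by
    ext i j
    have := b.inner_eq_ite i j
    rw [EuclideanSpace.inner_eq_star_dotProduct] at this
    rw [Matrix.one_apply, ← this, dotProduct_comm]
    simp [U, Matrix.mul_apply, dotProduct]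
  refine ⟨U, mul_eq_one_comm.mp h1, h1, ((‖x‖⁻¹ : ℝ) : ℂ), ?_⟩
  ext a
  simp [U, Matrix.col, hb0, v, x]

/-- a corner point `p` of `W` lies in the joint spectrum: the
matrices are simultaneously unitarily similar to block diagonal matrices with a
`1×1` block `pᵢ`, and there is a common eigenvector for the eigenvalues `pᵢ`. -/
theorem stmt15 {n k : ℕ} (hn : 2 ≤ n)
    (A : Fin k → Matrix (Fin n) (Fin n) ℂ)
    (hA : ∀ i, (A i).IsHermitian)
    (p : Fin k → ℝ) (hp : IsCornerPoint (JNR A) p) :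
    (∃ U : Matrix (Fin n) (Fin n) ℂ, Uᴴ * U = 1 ∧ U * Uᴴ = 1 ∧
      ∃ B : Fin k → Matrix (Fin (n - 1)) (Fin (n - 1)) ℂ,
        (∀ i, (B i).IsHermitian) ∧
        ∀ i, U * A i * Uᴴ =
          Matrix.reindex (finSumFinEquiv.trans (finCongr (by omega)))
            (finSumFinEquiv.trans (finCongr (by omega)))
            (Matrix.fromBlocks
              ((p i : ℂ) • (1 : Matrix (Fin 1) (Fin 1) ℂ)) 0 0 (B i))) ∧
    ∃ φ : Fin n → ℂ, φ ≠ 0 ∧ ∀ i, (A i) *ᵥ φ = (p i : ℂ) • φ := by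
  obtain ⟨φ, hφ, hev⟩ := exists_eig A hA p hp
  refine ⟨?_, φ, hφ, hev⟩
  set e : Fin 1 ⊕ Fin (n - 1) ≃ Fin n := finSumFinEquiv.trans (finCongr (by omega)) with he
  obtain ⟨U, h1, h2, c, hc⟩ := exists_U (e (Sum.inl 0)) φ hφ
  have hM : ∀ i, (U * A i * Uᴴ).IsHermitian := fun i =>
    Matrix.isHermitian_mul_mul_conjTranspose U (hA i)
  have hcol : ∀ i a, (U * A i * Uᴴ) a (e (Sum.inl 0)) =
      (p i : ℂ) * (1 : Matrix (Fin n) (Fin n) ℂ) a (e (Sum.inl 0)) := by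
    intro i a
    have h3 : A i *ᵥ (Uᴴ.col (e (Sum.inl 0))) = (p i : ℂ) • Uᴴ.col (e (Sum.inl 0)) := by
      rw [hc, Matrix.mulVec_smul, hev, smul_comm]
    have h4 : U *ᵥ (A i *ᵥ (Uᴴ.col (e (Sum.inl 0)))) =
        (p i : ℂ) • (U *ᵥ Uᴴ.col (e (Sum.inl 0))) := by
      rw [h3, Matrix.mulVec_smul]
    rw [← h2, Matrix.mul_assoc]
    exact congrFun h4 a
  refine ⟨U, h1, h2, fun i => (U * A i * Uᴴ).submatrix (e ∘ Sum.inr) (e ∘ Sum.inr),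
    fun i => (hM i).submatrix _, fun i => ?_⟩
  have hrow : ∀ a, (U * A i * Uᴴ) (e (Sum.inl 0)) a =
      (p i : ℂ) * (1 : Matrix (Fin n) (Fin n) ℂ) (e (Sum.inl 0)) a := by
    intro a
    rw [← (hM i).apply, hcol, Matrix.one_apply, Matrix.one_apply]
    by_cases h : a = e (Sum.inl 0)
    · simp [h]
    · simp [h, Ne.symm h]
  ext a b
  obtain ⟨a, rfl⟩ := e.surjective a
  obtain ⟨b, rfl⟩ := e.surjective b
  rw [Matrix.reindex_apply, Matrix.submatrix_apply, e.symm_apply_apply, e.symm_apply_apply]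
  rcases a with a | a <;> rcases b with b | b
  · obtain rfl := Subsingleton.elim a 0
    obtain rfl := Subsingleton.elim b 0
    rw [hcol]; simp
  · obtain rfl := Subsingleton.elim a 0
    rw [hrow]; simp [Matrix.one_apply]
  · obtain rfl := Subsingleton.elim b 0
    rw [hcol]; simp [Matrix.one_apply]
  · simp
end
end

section
/- Let A₁,...,A_k be hermitian n×n complex matrices. For every nonempty face F of W(A₁,...,A_k) there exist a natural number r with 1 ≤ r ≤ n and hermitian r×r complex matrices B₁,...,B_k such that F = W(B₁,...,B_k); that is, every nonempty face of a joint numerical range is itself the joint numerical range of k hermitian matrices of size at most n. -/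
open Matrix ComplexOrder

noncomputable section

lemma density_one_sub {r : ℕ} {τ : Matrix (Fin r) (Fin r) ℂ} (h : IsDensity τ) :
    (1 - τ).PosSemidef := by
  obtain ⟨hp, ht⟩ := h
  have hs := hp.1.spectral_theorem
  rw [Unitary.conjStarAlgAut_apply] at hs
  set U := hp.1.eigenvectorUnitary with hU
  have h1 : (U : Matrix (Fin r) (Fin r) ℂ) * (star U : Matrix (Fin r) (Fin r) ℂ) = 1 :=
    Unitary.coe_mul_star_self U
  have hle : ∀ i, hp.1.eigenvalues i ≤ 1 := by
    intro i
    have h2 := hp.1.trace_eq_sum_eigenvalues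
    rw [ht] at h2
    have h3 : (1 : ℝ) = ∑ i, hp.1.eigenvalues i := by
      have := congrArg Complex.re h2
      simpa using this
    rw [h3]
    exact Finset.single_le_sum (f := hp.1.eigenvalues)
      (fun j _ => hp.eigenvalues_nonneg j) (Finset.mem_univ i)
  have h4 : 1 - τ = (U : Matrix (Fin r) (Fin r) ℂ) *
      (diagonal (fun i => (((1 - hp.1.eigenvalues i : ℝ)) : ℂ))) *
      (U : Matrix (Fin r) (Fin r) ℂ)ᴴ := by
    have h5 : (diagonal (fun i => (((1 - hp.1.eigenvalues i : ℝ)) : ℂ)))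
        = 1 - diagonal (RCLike.ofReal ∘ hp.1.eigenvalues : Fin r → ℂ) := by
      rw [← diagonal_one, diagonal_sub]
      congr 1
      ext i
      simp
    rw [h5, Matrix.mul_sub, Matrix.sub_mul, Matrix.mul_one, ← star_eq_conjTranspose, h1]
    rw [← hs]
  rw [h4]
  apply PosSemidef.mul_mul_conjTranspose_same
  rw [posSemidef_diagonal_iff]
  intro i
  have := hle i
  exact_mod_cast sub_nonneg.2 this

lemma posSemidef_decomp {n : ℕ} {ρ : Matrix (Fin n) (Fin n) ℂ} (hp : ρ.PosSemidef) :
    ∃ r ≤ n, ∃ V : Matrix (Fin n) (Fin r) ℂ, ∃ d : Fin r → ℝ, (∀ i, 0 < d i) ∧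
      Vᴴ * V = 1 ∧ ρ = V * diagonal (fun i => (d i : ℂ)) * Vᴴ := by
  classical
  have hs := hp.1.spectral_theorem
  rw [Unitary.conjStarAlgAut_apply] at hs
  set U := hp.1.eigenvectorUnitary with hU
  have h1 : (U : Matrix (Fin n) (Fin n) ℂ)ᴴ * (U : Matrix (Fin n) (Fin n) ℂ) = 1 :=
    Unitary.coe_star_mul_self U
  let p : Fin n → Prop := fun i => hp.1.eigenvalues i ≠ 0
  let e : Fin (Fintype.card {i // p i}) ≃ {i // p i} := (Fintype.equivFin _).symm
  refine ⟨Fintype.card {i // p i}, (Fintype.card_subtype_le p).trans (by simp),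
    (U : Matrix (Fin n) (Fin n) ℂ).submatrix id (fun k => (e k).1),
    fun k => hp.1.eigenvalues (e k).1, ?_, ?_, ?_⟩
  · intro i
    exact lt_of_le_of_ne (hp.eigenvalues_nonneg _) (Ne.symm (e i).2)
  · have : ((U : Matrix (Fin n) (Fin n) ℂ).submatrix id (fun k => (e k).1))ᴴ *
      (U : Matrix (Fin n) (Fin n) ℂ).submatrix id (fun k => (e k).1) =
      ((U : Matrix (Fin n) (Fin n) ℂ)ᴴ * (U : Matrix (Fin n) (Fin n) ℂ)).submatrix
        (fun k => (e k).1) (fun k => (e k).1) := by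
      ext i j
      simp [Matrix.mul_apply]
    rw [this, h1]
    ext i j
    simp [Matrix.one_apply, Subtype.val_inj]
  · conv_lhs => rw [hs]
    ext i j
    rw [Matrix.mul_apply, Matrix.mul_apply]
    simp only [mul_diagonal, submatrix_apply, id, conjTranspose_apply, Function.comp]
    rw [e.sum_comp (fun s => (U : Matrix (Fin n) (Fin n) ℂ) i s.1 *
      ((hp.1.eigenvalues s.1 : ℝ) : ℂ) * star ((U : Matrix (Fin n) (Fin n) ℂ) j s.1))]
    rw [← Finset.sum_subtype (Finset.univ.filter p) (by simp)
      (fun s => (U : Matrix (Fin n) (Fin n) ℂ) i s *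
      ((hp.1.eigenvalues s : ℝ) : ℂ) * star ((U : Matrix (Fin n) (Fin n) ℂ) j s))]
    rw [Finset.sum_filter_of_ne]
    · rfl
    · intro x _ hx h0
      apply hx
      simp [h0]

lemma wpt_comb {n k : ℕ} (A : Fin k → Matrix (Fin n) (Fin n) ℂ) (a b : ℝ)
    (ρ σ : Matrix (Fin n) (Fin n) ℂ) :
    wpt A ((a : ℂ) • ρ + (b : ℂ) • σ) = a • wpt A ρ + b • wpt A σ := by
  ext i
  simp [wpt, Matrix.add_mul]

lemma density_comb {n : ℕ} {a b : ℝ} (ha : 0 ≤ a) (hb : 0 ≤ b) (hab : a + b = 1)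
    {ρ σ : Matrix (Fin n) (Fin n) ℂ} (hρ : IsDensity ρ) (hσ : IsDensity σ) :
    IsDensity ((a : ℂ) • ρ + (b : ℂ) • σ) := by
  refine ⟨(hρ.1.smul (by exact_mod_cast ha)).add (hσ.1.smul (by exact_mod_cast hb)), ?_⟩
  rw [trace_add, trace_smul, trace_smul, hρ.2, hσ.2]
  simp only [smul_eq_mul, mul_one]
  exact_mod_cast hab

lemma ker_half {n : ℕ} {ρ σ : Matrix (Fin n) (Fin n) ℂ} (hρ : ρ.PosSemidef)
    (hσ : σ.PosSemidef) {a b : ℝ} (ha : 0 < a) (hb : 0 < b) (x : Fin n → ℂ)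
    (hx : ((a : ℂ) • ρ + (b : ℂ) • σ) *ᵥ x = 0) : ρ *ᵥ x = 0 ∧ σ *ᵥ x = 0 := by
  have h1 := hρ.dotProduct_mulVec_nonneg x
  have h2 := hσ.dotProduct_mulVec_nonneg x
  have ha' : (0 : ℂ) < a := by exact_mod_cast ha
  have hb' : (0 : ℂ) < b := by exact_mod_cast hb
  have h3 : (a : ℂ) * (star x ⬝ᵥ ρ *ᵥ x) + (b : ℂ) * (star x ⬝ᵥ σ *ᵥ x) = 0 := by
    have := congrArg (fun y => star x ⬝ᵥ y) hx
    simpa [add_mulVec, smul_mulVec, dotProduct_add, dotProduct_smul] using this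
  rw [add_eq_zero_iff_of_nonneg (mul_nonneg ha'.le h1) (mul_nonneg hb'.le h2)] at h3
  rw [← hρ.dotProduct_mulVec_zero_iff, ← hσ.dotProduct_mulVec_zero_iff]
  exact ⟨(mul_eq_zero.1 h3.1).resolve_left ha'.ne', (mul_eq_zero.1 h3.2).resolve_left hb'.ne'⟩

lemma trace_conj {n r : ℕ} {V : Matrix (Fin n) (Fin r) ℂ} (hV : Vᴴ * V = 1)
    (τ : Matrix (Fin r) (Fin r) ℂ) : (V * τ * Vᴴ).trace = τ.trace := by
  rw [Matrix.trace_mul_comm, ← Matrix.mul_assoc, hV, Matrix.one_mul]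

lemma wpt_conj {n r k : ℕ} (A : Fin k → Matrix (Fin n) (Fin n) ℂ) (V : Matrix (Fin n) (Fin r) ℂ)
    (τ : Matrix (Fin r) (Fin r) ℂ) :
    wpt A (V * τ * Vᴴ) = wpt (fun i => Vᴴ * A i * V) τ := by
  ext i
  simp only [wpt]
  rw [Matrix.mul_assoc, Matrix.mul_assoc, Matrix.trace_mul_comm]
  simp only [Matrix.mul_assoc]

lemma exists_lower {r : ℕ} (d : Fin r → ℝ) (hd : ∀ i, 0 < d i) :
    ∃ m : ℝ, 0 < m ∧ m < 1 ∧ ∀ i, m ≤ d i := by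
  have : ∀ᶠ m in nhdsWithin (0 : ℝ) (Set.Ioi 0), 0 < m ∧ m < 1 ∧ ∀ i, m ≤ d i := by
    refine Filter.Eventually.and self_mem_nhdsWithin (Filter.Eventually.and ?_ ?_)
    · exact nhdsWithin_le_nhds (eventually_lt_nhds (by norm_num))
    · rw [Filter.eventually_all]
      intro i
      exact nhdsWithin_le_nhds (eventually_le_nhds (hd i))
  exact this.exists

/-- every nonempty face of a joint numerical range is itself the
joint numerical range of `k` hermitian matrices of size at most `n`. -/
theorem stmt17 {n k : ℕ} (A : Fin k → Matrix (Fin n) (Fin n) ℂ)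
    (hA : ∀ i, (A i).IsHermitian)
    (F : Set (Fin k → ℝ)) (hF : IsFaceOf (JNR A) F) (hFne : F.Nonempty) :
    ∃ r : ℕ, 1 ≤ r ∧ r ≤ n ∧
      ∃ B : Fin k → Matrix (Fin r) (Fin r) ℂ, (∀ i, (B i).IsHermitian) ∧
        F = JNR B := by
  obtain ⟨hconv, hext⟩ := hF
  let G : Set (Matrix (Fin n) (Fin n) ℂ) := {ρ | IsDensity ρ ∧ wpt A ρ ∈ F}
  have hG : G.Nonempty := by
    obtain ⟨x, hx⟩ := hFne
    obtain ⟨ρ, hρ, rfl⟩ := hext.subset hx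
    exact ⟨ρ, hρ, hx⟩
  obtain ⟨ρ, hρG, hmin⟩ : ∃ ρ ∈ G, ∀ σ ∈ G,
      Module.finrank ℂ (LinearMap.ker ρ.mulVecLin) ≤
        Module.finrank ℂ (LinearMap.ker σ.mulVecLin) := by
    let f : Matrix (Fin n) (Fin n) ℂ → ℕ :=
      fun ρ => Module.finrank ℂ (LinearMap.ker ρ.mulVecLin)
    exact ⟨Function.argminOn f G hG, Function.argminOn_mem f G hG,
      fun σ hσ => Function.argminOn_le f G hσ⟩
  obtain ⟨hρ, hρF⟩ := hρG
  have hker : ∀ σ ∈ G, ∀ x, ρ *ᵥ x = 0 → σ *ᵥ x = 0 := by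
    intro σ hσ x hx
    have hh : (0 : ℝ) < 1 / 2 := by norm_num
    let μ := ((1 / 2 : ℝ) : ℂ) • ρ + ((1 / 2 : ℝ) : ℂ) • σ
    have hμ : μ ∈ G := by
      refine ⟨density_comb hh.le hh.le (by norm_num) hρ hσ.1, ?_⟩
      rw [wpt_comb]
      exact hconv hρF hσ.2 hh.le hh.le (by norm_num)
    have hle : LinearMap.ker μ.mulVecLin ≤ LinearMap.ker ρ.mulVecLin := by
      intro y hy
      exact (ker_half hρ.1 hσ.1.1 hh hh y hy).1
    have heq := Submodule.eq_of_le_of_finrank_le hle (hmin μ hμ)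
    have hx' : x ∈ LinearMap.ker μ.mulVecLin := by
      rw [heq]; exact hx
    exact (ker_half hρ.1 hσ.1.1 hh hh x hx').2
  obtain ⟨r, hr, V, d, hd, hV, hdec⟩ := posSemidef_decomp hρ.1
  refine ⟨r, ?_, hr, fun i => Vᴴ * A i * V,
    fun i => isHermitian_conjTranspose_mul_mul V (hA i), ?_⟩
  · rcases Nat.eq_zero_or_pos r with h0 | h0
    · subst h0
      have := hρ.2
      rw [hdec, trace_conj hV] at this
      simp [Matrix.trace] at this
    · exact h0
  apply Set.Subset.antisymm
  · intro x hx
    obtain ⟨σ, hσ, rfl⟩ := hext.subset hx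
    have hσG : σ ∈ G := ⟨hσ, hx⟩
    have h0 : ρ * (1 - V * Vᴴ) = 0 := by
      rw [hdec, Matrix.mul_sub, Matrix.mul_one, Matrix.mul_assoc _ Vᴴ, ← Matrix.mul_assoc Vᴴ V,
        hV, Matrix.one_mul, sub_self]
    have h1 : σ * (1 - V * Vᴴ) = 0 := by
      ext i j
      have h2 : ρ *ᵥ (fun l => (1 - V * Vᴴ : Matrix (Fin n) (Fin n) ℂ) l j) = 0 := by
        ext l
        exact congrFun (congrFun h0 l) j
      exact congrFun (hker σ hσG _ h2) i
    have h2 : σ * (V * Vᴴ) = σ := by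
      rw [Matrix.mul_sub, Matrix.mul_one, sub_eq_zero] at h1
      exact h1.symm
    have h3 : (V * Vᴴ) * σ = σ := by
      have := congrArg conjTranspose h2
      rwa [conjTranspose_mul, hσ.1.1.eq, conjTranspose_mul, conjTranspose_conjTranspose] at this
    have h4 : V * (Vᴴ * σ * V) * Vᴴ = σ := by
      calc V * (Vᴴ * σ * V) * Vᴴ = (V * Vᴴ) * (σ * (V * Vᴴ)) := by
            simp only [Matrix.mul_assoc]
        _ = σ := by rw [h2, h3]
    refine ⟨Vᴴ * σ * V, ⟨hσ.1.conjTranspose_mul_mul_same V, ?_⟩, ?_⟩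
    · rw [← trace_conj hV, h4, hσ.2]
    · rw [← wpt_conj, h4]
  · rintro _ ⟨τ, hτ, rfl⟩
    rw [← wpt_conj]
    obtain ⟨m, hm0, hm1, hmd⟩ := exists_lower d hd
    have hm1' : (0 : ℝ) < 1 - m := by linarith
    have hne : ((1 - m : ℝ) : ℂ) ≠ 0 := by exact_mod_cast hm1'.ne'
    have hσ : IsDensity (V * τ * Vᴴ) :=
      ⟨hτ.1.mul_mul_conjTranspose_same V, by rw [trace_conj hV, hτ.2]⟩
    let D : Matrix (Fin r) (Fin r) ℂ := diagonal (fun i => (d i : ℂ))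
    have hDp : (D - (m : ℂ) • τ).PosSemidef := by
      have h1 : D - (m : ℂ) • τ = diagonal (fun i => ((d i - m : ℝ) : ℂ)) + (m : ℂ) • (1 - τ) := by
        have : diagonal (fun i => ((d i - m : ℝ) : ℂ)) = D - (m : ℂ) • 1 := by
          rw [← diagonal_one, ← diagonal_smul, diagonal_sub]
          congr 1
          ext i
          simp
        rw [this, smul_sub]
        abel
      rw [h1]
      refine PosSemidef.add ?_ ((density_one_sub hτ).smul (by exact_mod_cast hm0.le))
      rw [posSemidef_diagonal_iff]
      intro i
      exact_mod_cast sub_nonneg.2 (hmd i)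
    let ω := (((1 - m)⁻¹ : ℝ) : ℂ) • (ρ - (m : ℂ) • (V * τ * Vᴴ))
    have hω : IsDensity ω := by
      refine ⟨PosSemidef.smul ?_ (by exact_mod_cast (inv_pos.2 hm1').le), ?_⟩
      · have : ρ - (m : ℂ) • (V * τ * Vᴴ) = V * (D - (m : ℂ) • τ) * Vᴴ := by
          rw [Matrix.mul_sub, Matrix.sub_mul, ← hdec, Matrix.mul_smul, Matrix.smul_mul]
        rw [this]
        exact hDp.mul_mul_conjTranspose_same V
      · simp only [ω]
        rw [trace_smul, trace_sub, trace_smul, hρ.2, hσ.2]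
        simp only [smul_eq_mul, mul_one]
        exact_mod_cast inv_mul_cancel₀ hm1'.ne'
    have hcomb : ρ = (m : ℂ) • (V * τ * Vᴴ) + ((1 - m : ℝ) : ℂ) • ω := by
      simp only [ω]
      rw [smul_smul, Complex.ofReal_inv, mul_inv_cancel₀ hne, one_smul]
      abel
    refine hext.left_mem_of_mem_openSegment (Set.mem_image_of_mem _ hσ)
      (Set.mem_image_of_mem _ hω) hρF ⟨m, 1 - m, hm0, hm1', by ring, ?_⟩
    rw [← wpt_comb, ← hcomb]
end
end

section
/- Let A₁, A₂, A₃ be hermitian 4×4 complex matrices, and identify ℂ⁴ with ℂ² ⊗ ℂ² via the Kronecker product. Every exposed face F of W = W(A₁,A₂,A₃) that contains more than one point contains a point p that lies in the topological frontier of the separable joint numerical range W^sep(A₁,A₂,A₃). -/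
open Matrix ComplexOrder

noncomputable section

/-- A separable two-qubit density matrix, identifying `ℂ⁴ ≅ ℂ² ⊗ ℂ²` via the
Kronecker product. -/
def IsSeparableState (ρ : Matrix (Fin 4) (Fin 4) ℂ) : Prop :=
  ρ ∈ convexHull ℝ {μ : Matrix (Fin 4) (Fin 4) ℂ |
    ∃ σ τ : Matrix (Fin 2) (Fin 2) ℂ, IsDensity σ ∧ IsDensity τ ∧
      μ = Matrix.reindex finProdFinEquiv finProdFinEquiv
            (Matrix.kroneckerMap (· * ·) σ τ)}

/-- The separable joint numerical range of three hermitian `4×4` matrices. -/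
def SepJNR (A : Fin 3 → Matrix (Fin 4) (Fin 4) ℂ) : Set (Fin 3 → ℝ) :=
  wpt A '' {ρ | IsDensity ρ ∧ IsSeparableState ρ}

lemma prod_factor (z : Fin 4 → ℂ) (h : z 0 * z 3 = z 1 * z 2) :
    ∃ a b : Fin 2 → ℂ, ∀ i j, z (finProdFinEquiv (i, j)) = a i * b j := by
  have key : ∀ a b : Fin 2 → ℂ, z 0 = a 0 * b 0 → z 1 = a 0 * b 1 → z 2 = a 1 * b 0 →
      z 3 = a 1 * b 1 → ∀ i j, z (finProdFinEquiv (i, j)) = a i * b j := by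
    intro a b h0 h1 h2 h3 i j
    fin_cases i <;> fin_cases j
    · exact h0
    · exact h1
    · exact h2
    · exact h3
  by_cases h0 : z 0 = 0
  · rw [h0, zero_mul] at h
    rcases mul_eq_zero.mp h.symm with h1 | h2
    · exact ⟨![0, 1], ![z 2, z 3], key _ _ (by simp [h0]) (by simp [h1]) (by simp) (by simp)⟩
    · exact ⟨![z 1, z 3], ![0, 1], key _ _ (by simp [h0]) (by simp) (by simp [h2]) (by simp)⟩
  · refine ⟨![1, z 2 / z 0], ![z 0, z 1], key _ _ (by simp) (by simp) (by simp [h0]) ?_⟩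
    simp
    field_simp
    linear_combination h

lemma exists_prod_vec (K : Submodule ℂ (Fin 4 → ℂ)) (v w : Fin 4 → ℂ) (hv : v ∈ K) (hw : w ∈ K)
    (hind : ∀ s t : ℂ, s • v + t • w = 0 → s = 0 ∧ t = 0) :
    ∃ z ∈ K, z ≠ 0 ∧ z 0 * z 3 = z 1 * z 2 := by
  by_cases hq : w 0 * w 3 - w 1 * w 2 = 0
  · refine ⟨w, hw, ?_, by linear_combination hq⟩
    rintro rfl
    simpa using (hind 0 1 (by simp)).2
  · obtain ⟨t, ht⟩ := exists_quadratic_eq_zero (a := w 0 * w 3 - w 1 * w 2)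
      (b := v 0 * w 3 + w 0 * v 3 - v 1 * w 2 - w 1 * v 2) (c := v 0 * v 3 - v 1 * v 2) hq
      (by
        obtain ⟨s, hs⟩ := IsAlgClosed.exists_pow_nat_eq (discrim (w 0 * w 3 - w 1 * w 2)
          (v 0 * w 3 + w 0 * v 3 - v 1 * w 2 - w 1 * v 2) (v 0 * v 3 - v 1 * v 2)) (n := 2) (by norm_num)
        exact ⟨s, by rw [← hs, sq]⟩)
    refine ⟨v + t • w, K.add_mem hv (K.smul_mem _ hw), ?_, ?_⟩
    · intro h
      simpa using (hind 1 t (by simpa using h)).1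
    · simp
      linear_combination ht

lemma pure_density {n : Type*} [Fintype n] (v : n → ℂ) (hv : v ≠ 0) :
    0 < (star v ⬝ᵥ v) ∧ IsDensity ((star v ⬝ᵥ v)⁻¹ • vecMulVec v (star v)) := by
  have h : 0 < star v ⬝ᵥ v := Matrix.dotProduct_star_self_pos_iff.mpr hv
  refine ⟨h, (Matrix.posSemidef_vecMulVec_self_star v).smul (inv_nonneg.mpr h.le), ?_⟩
  rw [Matrix.trace_smul, Matrix.trace_vecMulVec, dotProduct_comm v, smul_eq_mul, inv_mul_cancel₀ h.ne']

lemma trace_pure {n : Type*} [Fintype n] (v : n → ℂ) (M : Matrix n n ℂ) :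
    (vecMulVec v (star v) * M).trace = star v ⬝ᵥ M *ᵥ v := by
  rw [Matrix.vecMulVec_mul, Matrix.trace_vecMulVec, dotProduct_comm, Matrix.dotProduct_mulVec]

lemma kernel_mul {n : Type*} [Fintype n] (M ρ : Matrix n n ℂ) (hM : M.PosSemidef)
    (hρ : ρ.PosSemidef) (h : (ρ * M).trace.re = 0) : M * ρ = 0 := by
  obtain ⟨m, B, rfl⟩ := Matrix.posSemidef_iff_eq_sum_vecMulVec.mp hρ
  rw [Matrix.sum_mul, Matrix.trace_sum, Complex.re_sum] at h
  simp_rw [trace_pure] at h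
  rw [Finset.sum_eq_zero_iff_of_nonneg
    (fun i _ => (Complex.le_def.mp (hM.dotProduct_mulVec_nonneg (B i))).1)] at h
  rw [Matrix.mul_sum]
  refine Finset.sum_eq_zero fun i hi => ?_
  have h2 : star (B i) ⬝ᵥ M *ᵥ (B i) = 0 := by
    have := Complex.le_def.mp (hM.dotProduct_mulVec_nonneg (B i))
    apply Complex.ext
    · exact h i hi
    · exact this.2.symm
  rw [Matrix.mul_vecMulVec, (hM.dotProduct_mulVec_zero_iff _).mp h2]
  simp

lemma density_compact : IsCompact {ρ : Matrix (Fin 4) (Fin 4) ℂ | IsDensity ρ} := by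
  have hS : IsCompact {B : Fin 4 → Fin 4 → ℂ | ∑ i, ∑ j, ‖B i j‖ ^ 2 = 1} := by
    apply Metric.isCompact_of_isClosed_isBounded
    · exact isClosed_eq (by fun_prop) continuous_const
    · refine (Metric.isBounded_closedBall (x := 0) (r := 1)).subset ?_
      intro B hB
      rw [mem_closedBall_zero_iff, pi_norm_le_iff_of_nonneg zero_le_one]
      intro i
      rw [pi_norm_le_iff_of_nonneg zero_le_one]
      intro j
      have h1 : ‖B i j‖ ^ 2 ≤ ∑ j, ‖B i j‖ ^ 2 :=
        Finset.single_le_sum (f := fun j => ‖B i j‖ ^ 2) (fun _ _ => by positivity) (Finset.mem_univ j)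
      have h2 : ∑ j, ‖B i j‖ ^ 2 ≤ ∑ i, ∑ j, ‖B i j‖ ^ 2 :=
        Finset.single_le_sum (f := fun i => ∑ j, ‖B i j‖ ^ 2) (fun _ _ => by positivity) (Finset.mem_univ i)
      have h3 : ∑ i, ∑ j, ‖B i j‖ ^ 2 = 1 := hB
      nlinarith [norm_nonneg (B i j)]
  have hc : Continuous (fun B : Fin 4 → Fin 4 → ℂ => (Matrix.of B)ᴴ * (Matrix.of B)) := by
    have : Continuous (fun B : Fin 4 → Fin 4 → ℂ => (Matrix.of B)) := continuous_id
    fun_prop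
  have htr : ∀ B : Matrix (Fin 4) (Fin 4) ℂ, (Bᴴ * B).trace = ((∑ i, ∑ j, ‖B i j‖ ^ 2 : ℝ) : ℂ) := by
    intro B
    simp only [Matrix.trace, Matrix.diag, Matrix.mul_apply, Matrix.conjTranspose_apply]
    rw [Finset.sum_comm]
    push_cast
    refine Finset.sum_congr rfl fun i _ => Finset.sum_congr rfl fun j _ => ?_
    exact Complex.conj_mul' _
  convert hS.image hc using 1
  ext ρ
  constructor
  · rintro ⟨h1, h2⟩
    obtain ⟨B, rfl⟩ : ∃ B : Matrix (Fin 4) (Fin 4) ℂ, ρ = Bᴴ * B := by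
      open scoped MatrixOrder Matrix.Norms.L2Operator in
      exact CStarAlgebra.nonneg_iff_eq_star_mul_self.mp h1.nonneg
    refine ⟨B, ?_, rfl⟩
    rw [htr] at h2
    exact_mod_cast h2
  · rintro ⟨B, hB, rfl⟩
    refine ⟨Matrix.posSemidef_conjTranspose_mul_self _, ?_⟩
    rw [htr]
    exact_mod_cast hB

lemma two_kernel (M D : Matrix (Fin 4) (Fin 4) ℂ) (hD : D.IsHermitian) (htr : D.trace = 0)
    (h0 : D ≠ 0) (hM : M * D = 0) : ∃ v w : Fin 4 → ℂ, M *ᵥ v = 0 ∧ M *ᵥ w = 0 ∧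
      ∀ s t : ℂ, s • v + t • w = 0 → s = 0 ∧ t = 0 := by
  have hcol : ∀ j, M *ᵥ (fun i => D i j) = 0 := by
    intro j
    ext i
    exact congrFun (congrFun hM i) j
  have : ∃ j, (fun i => D i j) ≠ 0 := by
    by_contra! h
    exact h0 (by ext i j; exact congrFun (h j) i)
  obtain ⟨j0, hj0⟩ := this
  by_contra! hcon
  -- every column is a multiple of column j0
  have hmul : ∀ j, ∃ c : ℂ, ∀ i, D i j = D i j0 * c := by
    intro j
    obtain ⟨s, t, hst, hne⟩ := hcon _ _ (hcol j) (hcol j0)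
    have hs : s ≠ 0 := by
      intro hs
      have ht := hne hs
      rw [hs, zero_smul, zero_add] at hst
      exact (smul_ne_zero ht hj0) hst
    refine ⟨-t / s, fun i => ?_⟩
    have := congrFun hst i
    simp at this
    field_simp
    linear_combination this
  choose c hc using hmul
  apply h0
  have hDD : Dᴴ * D = 0 := by
    rw [hD.eq]
    have e : D = vecMulVec (fun i => D i j0) c := by
      ext i j
      exact hc j i
    have htr' : (fun i => D i j0) ⬝ᵥ c = 0 := by
      rw [← Matrix.trace_vecMulVec, ← e, htr]
    rw [e, Matrix.vecMulVec_mul_vecMulVec, dotProduct_comm, htr']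
    simp
  exact Matrix.conjTranspose_mul_self_eq_zero.mp hDD

lemma sep_of_vec (z : Fin 4 → ℂ) (hz : z ≠ 0) (h : z 0 * z 3 = z 1 * z 2) :
    ∃ ρ, IsDensity ρ ∧ IsSeparableState ρ ∧ ∃ c : ℂ, ρ = c • vecMulVec z (star z) := by
  obtain ⟨a, b, hab⟩ := prod_factor z h
  have ha : a ≠ 0 := by
    rintro rfl
    apply hz
    ext k
    obtain ⟨⟨i, j⟩, rfl⟩ := (finProdFinEquiv (m := 2) (n := 2)).surjective k
    rw [hab i j]
    simp
  have hb : b ≠ 0 := by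
    rintro rfl
    apply hz
    ext k
    obtain ⟨⟨i, j⟩, rfl⟩ := (finProdFinEquiv (m := 2) (n := 2)).surjective k
    rw [hab i j]
    simp
  obtain ⟨pa, da⟩ := pure_density a ha
  obtain ⟨pb, db⟩ := pure_density b hb
  refine ⟨Matrix.reindex finProdFinEquiv finProdFinEquiv (Matrix.kroneckerMap (· * ·)
    ((star a ⬝ᵥ a)⁻¹ • vecMulVec a (star a)) ((star b ⬝ᵥ b)⁻¹ • vecMulVec b (star b))), ⟨?_, ?_⟩,
    subset_convexHull _ _ ⟨_, _, da, db, rfl⟩, (star a ⬝ᵥ a)⁻¹ * (star b ⬝ᵥ b)⁻¹, ?_⟩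
  · exact (da.1.kronecker db.1).submatrix _
  · have h1 := Matrix.trace_kronecker ((star a ⬝ᵥ a)⁻¹ • vecMulVec a (star a))
      ((star b ⬝ᵥ b)⁻¹ • vecMulVec b (star b))
    rw [da.2, db.2, mul_one] at h1
    rw [← h1]
    simp only [Matrix.trace, Matrix.diag, Matrix.reindex_apply, Matrix.submatrix_apply]
    exact Equiv.sum_comp finProdFinEquiv.symm (fun p => (Matrix.kroneckerMap (· * ·)
      ((star a ⬝ᵥ a)⁻¹ • vecMulVec a (star a)) ((star b ⬝ᵥ b)⁻¹ • vecMulVec b (star b))) p p)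
  · ext k l
    obtain ⟨⟨i, j⟩, rfl⟩ := finProdFinEquiv.surjective k
    obtain ⟨⟨i', j'⟩, rfl⟩ := finProdFinEquiv.surjective l
    simp only [Matrix.reindex_apply, Matrix.submatrix_apply, Equiv.symm_apply_apply,
      Matrix.kroneckerMap_apply, Matrix.smul_apply, Matrix.vecMulVec_apply, Pi.star_apply, hab,
      star_mul', smul_eq_mul]
    ring

lemma sep_subset (A : Fin 3 → Matrix (Fin 4) (Fin 4) ℂ) : SepJNR A ⊆ JNR A := by
  rintro _ ⟨ρ, h, rfl⟩
  exact ⟨ρ, h.1, rfl⟩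

lemma wpt_continuous (A : Fin 3 → Matrix (Fin 4) (Fin 4) ℂ) : Continuous (wpt A) := by
  unfold wpt
  refine continuous_pi fun i => ?_
  refine Complex.continuous_re.comp ?_
  have : Continuous fun ρ : Matrix (Fin 4) (Fin 4) ℂ => ρ * A i := by fun_prop
  exact this.matrix_trace

lemma sep_nonempty (A : Fin 3 → Matrix (Fin 4) (Fin 4) ℂ) : (SepJNR A).Nonempty := by
  obtain ⟨ρ, h1, h2, -⟩ := sep_of_vec ![1, 0, 0, 0] (by intro h; simpa using congrFun h 0) (by simp)
  exact ⟨_, ρ, ⟨h1, h2⟩, rfl⟩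

lemma frontier_case (A : Fin 3 → Matrix (Fin 4) (Fin 4) ℂ) :
    ∃ p ∈ JNR A, p ∈ frontier (SepJNR A) := by
  have hc : IsCompact (JNR A) := density_compact.image (wpt_continuous A)
  have hne : (frontier (SepJNR A)).Nonempty := by
    rw [Set.nonempty_iff_ne_empty, Ne, frontier_eq_empty_iff]
    rintro (h | h)
    · exact (sep_nonempty A).ne_empty h
    · have : JNR A = Set.univ := Set.univ_subset_iff.mp (h ▸ sep_subset A)
      rw [this] at hc
      exact noncompact_univ _ hc
  obtain ⟨p, hp⟩ := hne
  exact ⟨p, (closure_minimal (sep_subset A) hc.isClosed) (frontier_subset_closure hp), hp⟩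

lemma not_interior (S : Set (Fin 3 → ℝ)) (u p : Fin 3 → ℝ) (hu : u ≠ 0)
    (h : ∀ y ∈ S, dotR u p ≤ dotR u y) : p ∉ interior S := by
  intro hp
  have hcont : Continuous fun t : ℝ => p - t • u := by fun_prop
  have hev : ∀ᶠ t in nhds (0 : ℝ), p - t • u ∈ S :=
    hcont.continuousAt.eventually_mem (by simpa using mem_interior_iff_mem_nhds.mp hp)
  obtain ⟨t, ht, htpos⟩ := ((hev.filter_mono nhdsWithin_le_nhds).and
    (self_mem_nhdsWithin : Set.Ioi (0 : ℝ) ∈ nhdsWithin 0 (Set.Ioi 0))).exists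
  have h1 := h _ ht
  have h2 : dotR u (p - t • u) = dotR u p - t * ∑ i, u i * u i := by
    simp only [dotR, Pi.sub_apply, Pi.smul_apply, smul_eq_mul, mul_sub, Finset.sum_sub_distrib,
      Finset.mul_sum]
    congr 1
    exact Finset.sum_congr rfl fun i _ => by ring
  have h3 : 0 < ∑ i, u i * u i := by
    obtain ⟨i, hi⟩ := Function.ne_iff.mp hu
    exact Finset.sum_pos' (fun j _ => mul_self_nonneg _) ⟨i, Finset.mem_univ i, mul_self_pos.mpr hi⟩
  have := mul_pos (show 0 < t from htpos) h3
  linarith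

/-- every exposed face of `W` with more than one point contains a
point of the topological frontier of the separable joint numerical range. -/
theorem stmt18 (A : Fin 3 → Matrix (Fin 4) (Fin 4) ℂ)
    (hA : ∀ i, (A i).IsHermitian)
    (F : Set (Fin 3 → ℝ)) (hF : IsExposedFace (JNR A) F)
    (hF2 : ∃ x ∈ F, ∃ y ∈ F, x ≠ y) :
    ∃ p ∈ F, p ∈ frontier (SepJNR A) := by
  obtain ⟨u, rfl⟩ := hF
  obtain ⟨_, ⟨⟨ρ₁, d₁, rfl⟩, m₁⟩, _, ⟨⟨ρ₂, d₂, rfl⟩, m₂⟩, hne⟩ := hF2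
  by_cases hu : u = 0
  · subst hu
    obtain ⟨p, hp, hp'⟩ := frontier_case A
    exact ⟨p, ⟨hp, fun y _ => by simp [dotR]⟩, hp'⟩
  set l : ℝ := dotR u (wpt A ρ₁) with hl
  set M : Matrix (Fin 4) (Fin 4) ℂ := ∑ i, (u i : ℂ) • A i - (l : ℂ) • 1 with hMdef
  have htr : ∀ ρ : Matrix (Fin 4) (Fin 4) ℂ, ρ.trace = 1 → (ρ * M).trace.re = dotR u (wpt A ρ) - l := by
    intro ρ hρ
    rw [hMdef, Matrix.mul_sub, Matrix.trace_sub, Matrix.mul_sum, Matrix.trace_sum]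
    simp [dotR, wpt, hρ]
  have hMh : M.IsHermitian := by
    refine Matrix.IsHermitian.sub ?_ ?_
    · rw [Matrix.IsHermitian, Matrix.conjTranspose_sum]
      refine Finset.sum_congr rfl fun i _ => ?_
      rw [Matrix.conjTranspose_smul, (hA i).eq]
      simp
    · simp [Matrix.IsHermitian]
  have hMp : M.PosSemidef := by
    refine Matrix.PosSemidef.of_dotProduct_mulVec_nonneg hMh fun v => ?_
    by_cases hv : v = 0
    · simp [hv]
    obtain ⟨hp, hd⟩ := pure_density v hv
    have h1 := htr _ hd.2
    have h2 := m₁ _ ⟨_, hd, rfl⟩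
    rw [Matrix.smul_mul, Matrix.trace_smul, trace_pure] at h1
    have him : (star v ⬝ᵥ M *ᵥ v).im = 0 := by
      have := hMh.im_star_dotProduct_mulVec_self v
      simpa using this
    have hp' := Complex.lt_def.mp hp
    have e : star v ⬝ᵥ v = (((star v ⬝ᵥ v).re : ℝ) : ℂ) := by
      apply Complex.ext
      · simp
      · simpa using hp'.2.symm
    rw [e, ← Complex.ofReal_inv, smul_eq_mul, Complex.re_ofReal_mul] at h1
    have h3 : 0 ≤ ((star v ⬝ᵥ v).re)⁻¹ * (star v ⬝ᵥ M *ᵥ v).re := by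
      rw [h1]
      rw [e, ← Complex.ofReal_inv] at h2
      linarith
    have h4 : 0 < ((star v ⬝ᵥ v).re)⁻¹ := inv_pos.mpr hp'.1
    exact Complex.le_def.mpr ⟨nonneg_of_mul_nonneg_right h3 h4, him.symm⟩
  have k₁ : M * ρ₁ = 0 := kernel_mul M ρ₁ hMp d₁.1 (by rw [htr _ d₁.2, hl, sub_self])
  have k₂ : M * ρ₂ = 0 := kernel_mul M ρ₂ hMp d₂.1 (by
    rw [htr _ d₂.2, hl, sub_eq_zero]
    exact le_antisymm (m₂ _ ⟨_, d₁, rfl⟩) (m₁ _ ⟨_, d₂, rfl⟩))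
  obtain ⟨v, w, hv, hw, hind⟩ := two_kernel M (ρ₁ - ρ₂) (d₁.1.1.sub d₂.1.1)
    (by rw [Matrix.trace_sub, d₁.2, d₂.2, sub_self])
    (by intro h; exact hne (by rw [sub_eq_zero.mp h]))
    (by rw [Matrix.mul_sub, k₁, k₂, sub_self])
  obtain ⟨z, hz, hz0, hdet⟩ := exists_prod_vec (LinearMap.ker M.mulVecLin) v w
    (by simpa using hv) (by simpa using hw) hind
  obtain ⟨ρ, hd, hs, c, hc⟩ := sep_of_vec z hz0 hdet
  have hz' : M *ᵥ z = 0 := by simpa using hz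
  have h0 := htr ρ hd.2
  rw [hc, Matrix.smul_mul, Matrix.trace_smul, trace_pure, hz', ← hc] at h0
  simp at h0
  have hmin : ∀ y ∈ JNR A, dotR u (wpt A ρ) ≤ dotR u y := by
    intro y hy
    have := m₁ y hy
    linarith
  refine ⟨wpt A ρ, ⟨⟨ρ, hd, rfl⟩, hmin⟩, subset_closure ⟨ρ, ⟨hd, hs⟩, rfl⟩, ?_⟩
  exact not_interior _ u _ hu fun y hy => hmin y (sep_subset A hy)
end
end
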